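/- Let E : y² = x³ + ax + b be an elliptic curve over ℚ (a, b ∈ ℚ with 4a³ + 27b² ≠ 0). There exists a constant C > 1, depending only on E, such that for every squarefree nonzero integer D the following holds: if P₁,…,P_N is a sequence of affine rational points on the quadratic twist E^(D) : y² = x³ + aD²x + bD³ whose x-coordinates form a non-trivial arithmetic progression, or whose y-coordinates form a non-trivial arithmetic progression, then N ≤ C^(ω(D)+1). -/

import Mathlib

/-- `u 0, …, u (N-1)` is a non-trivial arithmetic progression. -/
def IsNontrivAP {F : Type*} [Field F] {N : ℕ} (u : Fin N → F) : Prop :=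
  ∃ a b : F, b ≠ 0 ∧ ∀ i : Fin N, u i = a + (((i : ℕ) + 1 : ℕ) : F) * b

/-- The quadratic twist by `D` of the elliptic curve `y² = x³ + ax + b`,
namely `y² = x³ + aD²x + bD³`. -/
def quadTwist (a b : ℚ) (D : ℤ) : WeierstrassCurve ℚ :=
  ⟨0, 0, 0, a * (D : ℚ) ^ 2, b * (D : ℚ) ^ 3⟩

/-!
On the model `D y² = x³ + ax + b` of the twist, the Weil height of `x` satisfies the parallelogram
law up to an error independent of `D`, and the number of points of bounded height is bounded
independently of `D`. Three terms of an arithmetic progression satisfy a linear relation;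
eliminating the `y`-coordinates from it bounds the height of any of the three points by the heights
of the other two and `log N`, and a similar elimination bounds the height of a term by the heights
of two differences from it. So apart from one small term the heights are all of the same size `H`,
and if `H` is large compared with `log N` the balls of radius a small multiple of `H` around the
terms overlap at most twice.

Complete 2-descent over the fields generated by the roots of the cubic splits the points into at
most `M = C ^ (ω(D) + 1)` classes modulo doubling, and then the parallelogram law shows that
doubling `B` multiplies the number of points of canonical height at most `B` by at most `2M`. When
`H` is large this turns the packing of balls into a bound on `N`; when `H = O(log N)` it yields
`N ≤ (2M) ^ k * O(√N)` for a fixed `k`.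
-/

namespace QuadTwistAP

/-! ### Coverings by few classes -/

section Covering

/-- `S` is partitioned into at most `M` classes (the fibres of `κ`), each consisting of elements
that are pairwise related by `r`. This is how "finite index" is counted throughout: `r` is
congruence modulo doubles in an additive group, or modulo squares in a field. -/
def CoveredByClasses {X : Type*} (r : X → X → Prop) (S : Set X) (M : ℕ) : Prop :=
  ∃ κ : X → Fin M, ∀ u ∈ S, ∀ v ∈ S, κ u = κ v → r u v

variable {X : Type*} {r r' : X → X → Prop} {S S' : Set X} {M M' : ℕ}

theorem CoveredByClasses.mono (hS : CoveredByClasses r S M) (hM : M ≤ M') :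
    CoveredByClasses r S M' := by
  obtain ⟨κ, hκ⟩ := hS
  exact ⟨fun u => Fin.castLE hM (κ u), fun u hu v hv huv =>
    hκ u hu v hv (Fin.castLE_injective hM huv)⟩

theorem CoveredByClasses.pos [Nonempty X] (hS : CoveredByClasses r S M) : 0 < M := by
  obtain ⟨κ, -⟩ := hS
  exact Fin.pos (κ (Classical.arbitrary X))

theorem coveredByClasses_of_finite {T : Type*} [Finite T] (τ : X → T)
    (hτ : ∀ u ∈ S, ∀ v ∈ S, τ u = τ v → r u v) : CoveredByClasses r S (Nat.card T) :=
  ⟨Finite.equivFin T ∘ τ, fun u hu v hv huv =>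
    hτ u hu v hv ((Finite.equivFin T).injective huv)⟩

theorem exists_coveredByClasses_eq (hS : S.Finite) :
    ∃ m : ℕ, CoveredByClasses (· = ·) S m := by
  classical
  have := hS.to_subtype
  refine ⟨_, coveredByClasses_of_finite
    (fun u => if hu : u ∈ S then some (⟨u, hu⟩ : S) else none) fun u hu v hv huv => ?_⟩
  simpa [hu, hv] using huv

theorem CoveredByClasses.and (hr : CoveredByClasses r S M) (hr' : CoveredByClasses r' S M') :
    CoveredByClasses (fun u v => r u v ∧ r' u v) S (M * M') := by
  obtain ⟨κ, hκ⟩ := hr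
  obtain ⟨κ', hκ'⟩ := hr'
  rw [← Nat.card_fin M, ← Nat.card_fin M', ← Nat.card_prod]
  refine coveredByClasses_of_finite (fun u => (κ u, κ' u)) fun u hu v hv huv => ?_
  obtain ⟨h, h'⟩ := Prod.mk.inj huv
  exact ⟨hκ u hu v hv h, hκ' u hu v hv h'⟩

theorem CoveredByClasses.union (hS : CoveredByClasses r S M) (hS' : CoveredByClasses r S' M') :
    CoveredByClasses r (S ∪ S') (M + M') := by
  classical
  obtain ⟨κ, hκ⟩ := hS
  obtain ⟨κ', hκ'⟩ := hS'
  rw [← Nat.card_fin M, ← Nat.card_fin M', ← Nat.card_sum]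
  refine coveredByClasses_of_finite
    (fun u => if u ∈ S then Sum.inl (κ u) else Sum.inr (κ' u)) fun u hu v hv huv => ?_
  by_cases huS : u ∈ S <;> by_cases hvS : v ∈ S <;> simp only [huS, hvS, if_true, if_false] at huv
  · exact hκ u huS v hvS (Sum.inl.inj huv)
  · exact absurd huv Sum.inl_ne_inr
  · exact absurd huv Sum.inr_ne_inl
  · exact hκ' u (hu.resolve_left huS) v (hv.resolve_left hvS) (Sum.inr.inj huv)

theorem CoveredByClasses.of_mapsTo {Y : Type*} {s : Y → Y → Prop} {T : Set Y}
    (hr : CoveredByClasses r S M) (f : Y → X) (hf : Set.MapsTo f T S)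
    (hs : ∀ u ∈ T, ∀ v ∈ T, r (f u) (f v) → s u v) : CoveredByClasses s T M := by
  obtain ⟨κ, hκ⟩ := hr
  exact ⟨κ ∘ f, fun u hu v hv huv => hs u hu v hv (hκ _ (hf hu) _ (hf hv) huv)⟩

end Covering

/-! ### Quadratic heights on abelian groups -/

/-- The number of elements of height at most `B` (`0` if there are infinitely many). -/
noncomputable def countLE {X : Type*} (h : X → ℝ) (B : ℝ) : ℕ :=
  {x | h x ≤ B}.ncard

/-- At most exponentially many elements have height at most `B`. -/
def HasExpGrowth {X : Type*} (h : X → ℝ) (c : ℝ) : Prop :=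
  ∀ B, 0 ≤ B → (countLE h B : ℝ) ≤ c * Real.exp (c * B)

/-- A nonnegative function with the Northcott property which satisfies the parallelogram law up to
an error `δ`: a Weil height for suitable `δ`, a canonical height for `δ = 0`. -/
structure IsQuadraticHeight {A : Type*} [AddCommGroup A] (h : A → ℝ) (δ : ℝ) : Prop where
  nonneg (P : A) : 0 ≤ h P
  abs_parallelogram_le (P Q : A) : |h (P + Q) + h (P - Q) - (2 * h P + 2 * h Q)| ≤ δ
  finite_le (B : ℝ) : {P | h P ≤ B}.Finite

/-- The gap principle satisfied by the terms of an arithmetic progression: any two terms control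
the height of every third one, and any two differences from a term control the height of that
term, up to a logarithm of the length of the sequence. -/
structure IsHeightSpread {A ι : Type*} [AddCommGroup A] [Fintype ι] (h : A → ℝ) (P : ι → A)
    (c : ℝ) : Prop where
  le_of_pair ⦃i j k : ι⦄ (hij : i ≠ j) (hjk : j ≠ k) (hik : i ≠ k) :
    h (P k) ≤ c * (h (P i) + h (P j) + (Real.log (Fintype.card ι) + 1))
  le_of_sub_pair ⦃i j k : ι⦄ (hij : i ≠ j) (hjk : j ≠ k) (hik : i ≠ k) :
    h (P i) ≤ c * (h (P j - P i) + h (P k - P i) + (Real.log (Fintype.card ι) + 1))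

theorem countLE_mono {X : Type*} {h : X → ℝ} (hfin : ∀ B, {x | h x ≤ B}.Finite) :
    Monotone (countLE h) := fun _ B hB =>
  Set.ncard_le_ncard (fun _ hx => le_trans hx hB) (hfin B)

theorem HasExpGrowth.mono {X : Type*} {h : X → ℝ} {c c' : ℝ} (hh : HasExpGrowth h c)
    (hc : 0 ≤ c) (hcc : c ≤ c') : HasExpGrowth h c' := fun B hB =>
  (hh B hB).trans (by have := hc.trans hcc; gcongr)

/-! ### Counting points modulo doubles -/

theorem card_sq_le_mul_card_collisions {X : Type*} {M : ℕ} (S : Finset X) (κ : X → Fin M) :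
    S.card ^ 2 ≤ M * ((S ×ˢ S).filter fun p => κ p.1 = κ p.2).card := by
  classical
  have card_eq_sum : S.card = ∑ m : Fin M, (S.filter fun p => κ p = m).card :=
    Finset.card_eq_sum_card_fiberwise fun _ _ => Finset.mem_coe.mpr (Finset.mem_univ _)
  have collisions_eq_sum : ((S ×ˢ S).filter fun p => κ p.1 = κ p.2).card =
      ∑ m : Fin M, (S.filter fun p => κ p = m).card ^ 2 := by
    rw [Finset.card_eq_sum_card_fiberwise (f := fun p => κ p.1) (t := Finset.univ)
      fun _ _ => Finset.mem_coe.mpr (Finset.mem_univ _)]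
    refine Finset.sum_congr rfl fun m _ => ?_
    rw [sq, ← Finset.card_product]
    congr 1
    ext ⟨p, q⟩
    simp only [Finset.mem_filter, Finset.mem_product]
    grind
  rw [card_eq_sum, collisions_eq_sum]
  simpa using sq_sum_le_card_mul_sum_sq (s := (Finset.univ : Finset (Fin M)))
    (f := fun m => (S.filter fun p => κ p = m).card)

namespace IsQuadraticHeight

variable {A : Type*} [AddCommGroup A] {h : A → ℝ} {M : ℕ}

theorem parallelogram (hh : IsQuadraticHeight h 0) (P Q : A) :
    h (P + Q) + h (P - Q) = 2 * h P + 2 * h Q :=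
  sub_eq_zero.mp (abs_nonpos_iff.mp (hh.abs_parallelogram_le P Q))

theorem map_zero (hh : IsQuadraticHeight h 0) : h 0 = 0 := by
  have := hh.parallelogram 0 0
  rw [add_zero, sub_zero] at this
  linarith

theorem map_add_le (hh : IsQuadraticHeight h 0) (P Q : A) : h (P + Q) ≤ 2 * h P + 2 * h Q := by
  linarith [hh.parallelogram P Q, hh.nonneg (P - Q)]

theorem map_sub_le (hh : IsQuadraticHeight h 0) (P Q : A) : h (P - Q) ≤ 2 * h P + 2 * h Q := by
  linarith [hh.parallelogram P Q, hh.nonneg (P + Q)]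

theorem countLE_pos (hh : IsQuadraticHeight h 0) {B : ℝ} (hB : 0 ≤ B) : 0 < countLE h B :=
  (Set.ncard_pos (hh.finite_le B)).mpr ⟨0, by rw [Set.mem_ofPred_eq, hh.map_zero]; exact hB⟩

-- A pair `(P, Q)` with `P - Q = 2R` is `(S + R, S - R)`, and `h S + h R ≤ B` by the
-- parallelogram law, so `S` or `R` lies in the smaller ball.
theorem card_even_pairs_le (hh : IsQuadraticHeight h 0) {B : ℝ} {T : Finset (A × A)}
    (hT : ∀ p ∈ T, h p.1 ≤ B ∧ h p.2 ≤ B ∧ Even (p.1 - p.2)) :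
    T.card ≤ 2 * (countLE h (B / 2) * countLE h B) := by
  classical
  set ball := (hh.finite_le B).toFinset with hball
  set halfBall := (hh.finite_le (B / 2)).toFinset with hhalf
  have mid_exists : ∀ p : A × A, ∃ sr : A × A,
      p ∈ T → p.1 = sr.1 + sr.2 ∧ p.2 = sr.1 - sr.2 := by
    intro p
    by_cases hp : p ∈ T
    · obtain ⟨R, hR⟩ := (hT p hp).2.2
      have hp2 : p.2 = p.1 - (R + R) := by rw [← hR, sub_sub_cancel]
      exact ⟨(p.1 - R, R), fun _ => ⟨(sub_add_cancel _ _).symm, by rw [hp2, sub_sub]⟩⟩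
    · exact ⟨0, fun hp' => absurd hp' hp⟩
  choose mid hmid using mid_exists
  have card_le : T.card ≤ ((halfBall ×ˢ ball) ∪ (ball ×ˢ halfBall)).card := by
    refine Finset.card_le_card_of_injOn mid (fun p hp => ?_) fun p hp q hq hpq => ?_
    · obtain ⟨hp1, hp2, -⟩ := hT p hp
      obtain ⟨eq1, eq2⟩ := hmid p hp
      rw [eq1] at hp1
      rw [eq2] at hp2
      have hpar := hh.parallelogram (mid p).1 (mid p).2
      have := hh.nonneg (mid p).1
      have := hh.nonneg (mid p).2
      simp only [Finset.coe_union, Set.mem_union, Finset.mem_coe, Finset.mem_product, hball, hhalf,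
        Set.Finite.mem_toFinset, Set.mem_ofPred_eq]
      rcases le_or_gt (h (mid p).1) (B / 2) with hle | hgt
      · exact Or.inl ⟨hle, by linarith⟩
      · exact Or.inr ⟨by linarith, by linarith⟩
    · rw [Prod.ext_iff, (hmid p hp).1, (hmid p hp).2, (hmid q hq).1, (hmid q hq).2, hpq]
      exact ⟨rfl, rfl⟩
  calc T.card ≤ (halfBall ×ˢ ball).card + (ball ×ˢ halfBall).card :=
        card_le.trans (Finset.card_union_le _ _)
    _ = 2 * (halfBall.card * ball.card) := by simp only [Finset.card_product]; ring
    _ = _ := by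
        simp only [countLE, Set.ncard_eq_toFinset_card _ (hh.finite_le _), hball, hhalf]

theorem countLE_le_mul_countLE_half (hh : IsQuadraticHeight h 0)
    (hcov : CoveredByClasses (fun P Q : A => Even (P - Q)) Set.univ M) {B : ℝ} (hB : 0 ≤ B) :
    countLE h B ≤ 2 * M * countLE h (B / 2) := by
  classical
  obtain ⟨κ, hκ⟩ := hcov
  set ball := (hh.finite_le B).toFinset with hball
  have hcard : countLE h B = ball.card := Set.ncard_eq_toFinset_card _ (hh.finite_le B)
  have mem_ball : ∀ {P}, P ∈ ball → h P ≤ B := fun hP => by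
    rwa [hball, Set.Finite.mem_toFinset] at hP
  have pairs_le := hh.card_even_pairs_le (B := B)
    (T := (ball ×ˢ ball).filter fun p => κ p.1 = κ p.2) fun p hp => by
      obtain ⟨hmem, heq⟩ := Finset.mem_filter.mp hp
      obtain ⟨hp1, hp2⟩ := Finset.mem_product.mp hmem
      exact ⟨mem_ball hp1, mem_ball hp2, hκ _ trivial _ trivial heq⟩
  have sq_le : countLE h B * countLE h B ≤ 2 * M * countLE h (B / 2) * countLE h B := by
    calc countLE h B * countLE h B = ball.card ^ 2 := by rw [hcard, sq]
      _ ≤ M * (2 * (countLE h (B / 2) * countLE h B)) :=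
          (card_sq_le_mul_card_collisions ball κ).trans (Nat.mul_le_mul_left M pairs_le)
      _ = _ := by ring
  exact Nat.le_of_mul_le_mul_right sq_le (hh.countLE_pos hB)

theorem countLE_le_pow_mul_countLE_div (hh : IsQuadraticHeight h 0)
    (hcov : CoveredByClasses (fun P Q : A => Even (P - Q)) Set.univ M) {B : ℝ} (hB : 0 ≤ B)
    (k : ℕ) : countLE h B ≤ (2 * M) ^ k * countLE h (B / 2 ^ k) := by
  induction k with
  | zero => simp
  | succ k ih =>
    calc countLE h B ≤ (2 * M) ^ k * countLE h (B / 2 ^ k) := ih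
      _ ≤ (2 * M) ^ k * (2 * M * countLE h (B / 2 ^ k / 2)) :=
          Nat.mul_le_mul_left _ (hh.countLE_le_mul_countLE_half hcov (by positivity))
      _ = _ := by rw [div_div, ← pow_succ]; ring

/-! ### The gap principle -/

variable {ι : Type*} {P : ι → A} {c : ℝ}

theorem card_le_of_forall_height_le [Fintype ι] (hh : IsQuadraticHeight h 0)
    (hcov : CoveredByClasses (fun P Q : A => Even (P - Q)) Set.univ M)
    (hgrowth : HasExpGrowth h c) (hc : 0 ≤ c) (hP : Function.Injective P) [Nonempty ι] {B : ℝ}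
    (hB : 0 ≤ B) (hle : ∀ i, h (P i) ≤ B) {k : ℕ}
    (hk : c * B * 2 ≤ 2 ^ k * (Real.log (Fintype.card ι) + 1)) :
    (Fintype.card ι : ℝ) ≤ 2 ^ (2 * k) * c ^ 2 * Real.exp 1 * M ^ (2 * k) := by
  set N := Fintype.card ι
  have hN : 0 < (N : ℝ) := Nat.cast_pos.mpr Fintype.card_pos
  have card_le : N ≤ countLE h B := by
    rw [countLE, show N = _ from Fintype.card_eq_nat_card, ← Set.ncard_univ,
      ← Set.ncard_image_of_injective _ hP]
    exact Set.ncard_le_ncard (by rintro _ ⟨i, -, rfl⟩; exact hle i) (hh.finite_le B)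
  have exponent_le : c * (B / 2 ^ k) ≤ (Real.log N + 1) / 2 := by
    rw [← mul_div_assoc, div_le_div_iff₀ (by positivity) two_pos]
    linarith
  have card_le_exp : (N : ℝ) ≤ (2 * M) ^ k * (c * Real.exp ((Real.log N + 1) / 2)) :=
    calc (N : ℝ) ≤ (2 * M) ^ k * (countLE h (B / 2 ^ k) : ℝ) := by
          exact_mod_cast card_le.trans (hh.countLE_le_pow_mul_countLE_div hcov hB k)
      _ ≤ (2 * M) ^ k * (c * Real.exp (c * (B / 2 ^ k))) := by
          gcongr; exact hgrowth _ (by positivity)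
      _ ≤ _ := by gcongr
  have exp_sq : Real.exp ((Real.log N + 1) / 2) ^ 2 = Real.exp 1 * N := by
    rw [← Real.exp_nat_mul, Nat.cast_ofNat, mul_div_cancel₀ _ two_ne_zero, Real.exp_add,
      Real.exp_log hN, mul_comm]
  refine le_of_mul_le_mul_right ?_ hN
  calc (N : ℝ) * N = (N : ℝ) ^ 2 := (sq _).symm
    _ ≤ ((2 * M) ^ k * (c * Real.exp ((Real.log N + 1) / 2))) ^ 2 := by gcongr
    _ = _ := by rw [mul_pow, mul_pow c, exp_sq]; ring

-- Translates of the ball of radius `ρ` by the points `P i` are at most doubly overlapping.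
theorem card_mul_countLE_le_of_isolated (hh : IsQuadraticHeight h 0) {I : Finset ι} {ρ R : ℝ}
    (hle : ∀ i ∈ I, h (P i) ≤ R)
    (hisolated : ∀ ⦃i j k⦄, i ∈ I → i ≠ j → j ≠ k → i ≠ k →
      h (P j - P i) ≤ 4 * ρ → ¬ h (P k - P i) ≤ 4 * ρ) :
    I.card * countLE h ρ ≤ 2 * countLE h (2 * R + 2 * ρ) := by
  classical
  set ball := (hh.finite_le ρ).toFinset with hball
  set bigBall := (hh.finite_le (2 * R + 2 * ρ)).toFinset with hbig
  have mem_ball : ∀ {Q}, Q ∈ ball → h Q ≤ ρ := fun hQ => by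
    rwa [hball, Set.Finite.mem_toFinset] at hQ
  suffices (I ×ˢ ball).card ≤ 2 * bigBall.card by
    simpa only [countLE, Set.ncard_eq_toFinset_card _ (hh.finite_le _), Finset.card_product]
      using this
  refine Finset.card_le_mul_card_image_of_maps_to (f := fun p => P p.1 + p.2) ?_ 2 ?_
  · rintro ⟨i, Q⟩ hp
    obtain ⟨hi, hQ⟩ := Finset.mem_product.mp hp
    rw [hbig, Set.Finite.mem_toFinset]
    exact (hh.map_add_le (P i) Q).trans (by linarith [hle i hi, mem_ball hQ])
  · intro u _
    by_contra! hcard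
    obtain ⟨⟨i, Q⟩, ⟨j, R⟩, ⟨k, S⟩, hi, hj, hk, hij, hik, hjk⟩ := Finset.two_lt_card_iff.mp hcard
    simp only [Finset.mem_filter, Finset.mem_product] at hi hj hk
    obtain ⟨⟨hiI, hQ⟩, hiu⟩ := hi
    obtain ⟨⟨-, hR⟩, hju⟩ := hj
    obtain ⟨⟨-, hS⟩, hku⟩ := hk
    have index_ne : ∀ {i j Q R}, P i + Q = u → P j + R = u → (i, Q) ≠ (j, R) → i ≠ j := by
      rintro i _ Q R hi hj hne rfl
      exact hne (by rw [add_left_cancel (hi.trans hj.symm)])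
    have sub_le : ∀ {j R}, R ∈ ball → P j + R = u → h (P j - P i) ≤ 4 * ρ := by
      intro j R hR hj
      have hsub : P j - P i = Q - R := by
        rw [sub_eq_sub_iff_add_eq_add, hj, ← hiu, add_comm]
      rw [hsub]
      linarith [hh.map_sub_le Q R, mem_ball hQ, mem_ball hR]
    exact hisolated hiI (index_ne hiu hju hij) (index_ne hju hku hjk) (index_ne hiu hku hik)
      (sub_le hR hju) (sub_le hS hku)

theorem card_le_of_isolated (hh : IsQuadraticHeight h 0)
    (hcov : CoveredByClasses (fun P Q : A => Even (P - Q)) Set.univ M) {I : Finset ι} {ρ R : ℝ}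
    (hρ : 0 ≤ ρ) (hle : ∀ i ∈ I, h (P i) ≤ R)
    (hisolated : ∀ ⦃i j k⦄, i ∈ I → i ≠ j → j ≠ k → i ≠ k →
      h (P j - P i) ≤ 4 * ρ → ¬ h (P k - P i) ≤ 4 * ρ)
    {k : ℕ} (hR : 0 ≤ R) (hk : 2 * R + 2 * ρ ≤ 2 ^ k * ρ) : I.card ≤ 2 * (2 * M) ^ k := by
  refine Nat.le_of_mul_le_mul_right ?_ (hh.countLE_pos hρ)
  calc I.card * countLE h ρ ≤ 2 * countLE h (2 * R + 2 * ρ) :=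
        hh.card_mul_countLE_le_of_isolated hle hisolated
    _ ≤ 2 * ((2 * M) ^ k * countLE h ((2 * R + 2 * ρ) / 2 ^ k)) := by
        gcongr; exact hh.countLE_le_pow_mul_countLE_div hcov (by positivity) k
    _ ≤ 2 * ((2 * M) ^ k * countLE h ρ) := by
        gcongr
        exact countLE_mono hh.finite_le (by rw [div_le_iff₀ (by positivity)]; linarith)
    _ = _ := by ring

end IsQuadraticHeight

theorem exists_two_smallest {ι : Type*} [Fintype ι] (hι : 2 ≤ Fintype.card ι) (f : ι → ℝ) :
    ∃ i₁ i₂, i₁ ≠ i₂ ∧ f i₁ ≤ f i₂ ∧ ∀ j, j ≠ i₁ → f i₂ ≤ f j := by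
  classical
  have : Nonempty ι := Fintype.card_pos_iff.mp (by lia)
  obtain ⟨i₁, hi₁⟩ := Finite.exists_min f
  have herase : (Finset.univ.erase i₁).Nonempty := by
    rw [← Finset.card_pos, Finset.card_erase_of_mem (Finset.mem_univ _), Finset.card_univ]
    lia
  obtain ⟨i₂, hmem, hi₂⟩ := Finset.exists_min_image _ f herase
  exact ⟨i₁, i₂, (Finset.ne_of_mem_erase hmem).symm, hi₁ i₂, fun j hj =>
    hi₂ j (Finset.mem_erase.mpr ⟨hj, Finset.mem_univ j⟩)⟩

namespace IsHeightSpread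

variable {A ι : Type*} [AddCommGroup A] [Fintype ι] {h : A → ℝ} {P : ι → A} {c : ℝ} {M : ℕ}

theorem le_of_two_smallest (hs : IsHeightSpread h P c) (hc : 1 ≤ c) (h0 : ∀ Q, 0 ≤ h Q)
    {i₁ i₂ : ι} (hne : i₁ ≠ i₂) (hle : h (P i₁) ≤ h (P i₂)) (j : ι) :
    h (P j) ≤ c * (2 * h (P i₂) + (Real.log (Fintype.card ι) + 1)) := by
  have hlog : 0 ≤ Real.log (Fintype.card ι) := Real.log_natCast_nonneg _
  have h0' := h0 (P i₂)
  rcases eq_or_ne j i₁ with rfl | hj₁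
  · nlinarith
  rcases eq_or_ne j i₂ with rfl | hj₂
  · nlinarith
  · calc h (P j) ≤ c * (h (P i₁) + h (P i₂) + (Real.log (Fintype.card ι) + 1)) :=
          hs.le_of_pair hne hj₂.symm hj₁.symm
      _ ≤ _ := by gcongr; linarith

theorem card_le_of_height_le_log (hs : IsHeightSpread h P c) (hh : IsQuadraticHeight h 0)
    (hgrowth : HasExpGrowth h c)
    (hcov : CoveredByClasses (fun P Q : A => Even (P - Q)) Set.univ M)
    (hP : Function.Injective P) (hc : 1 ≤ c) {k : ℕ} (hk : 224 * c ^ 3 ≤ 2 ^ k) {i₁ i₂ : ι}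
    (hne : i₁ ≠ i₂) (hle : h (P i₁) ≤ h (P i₂))
    (hsmall : h (P i₂) ≤ 4 * c * (Real.log (Fintype.card ι) + 1)) :
    (Fintype.card ι : ℝ) ≤ 2 ^ (2 * k) * c ^ 2 * Real.exp 1 * M ^ (2 * k) := by
  have : Nonempty ι := ⟨i₁⟩
  have : 0 ≤ Real.log (Fintype.card ι) := Real.log_natCast_nonneg _
  set L := Real.log (Fintype.card ι) + 1
  have hcc : c ^ 2 ≤ c ^ 3 := pow_le_pow_right₀ hc (by norm_num)
  refine hh.card_le_of_forall_height_le (B := c * (8 * c + 1) * L) hcov hgrowth (by linarith) hP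
    (by positivity) (fun j => ?_) ?_
  · calc h (P j) ≤ c * (2 * h (P i₂) + L) := hs.le_of_two_smallest hc hh.nonneg hne hle j
      _ ≤ c * (2 * (4 * c * L) + L) := by gcongr
      _ = _ := by ring
  · calc c * (c * (8 * c + 1) * L) * 2 = (16 * c ^ 3 + 2 * c ^ 2) * L := by ring
      _ ≤ 2 ^ k * L := by gcongr; nlinarith

theorem card_le_of_log_lt_height (hs : IsHeightSpread h P c) (hh : IsQuadraticHeight h 0)
    (hcov : CoveredByClasses (fun P Q : A => Even (P - Q)) Set.univ M) (hc : 1 ≤ c) {k : ℕ}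
    (hk : 224 * c ^ 3 ≤ 2 ^ k) {i₁ i₂ : ι} (hne : i₁ ≠ i₂) (hle : h (P i₁) ≤ h (P i₂))
    (hmin : ∀ j, j ≠ i₁ → h (P i₂) ≤ h (P j))
    (hlarge : 4 * c * (Real.log (Fintype.card ι) + 1) < h (P i₂)) :
    Fintype.card ι ≤ 3 * (2 * M) ^ k := by
  classical
  have hlog : 0 ≤ Real.log (Fintype.card ι) := Real.log_natCast_nonneg _
  have hbound := hs.le_of_two_smallest hc hh.nonneg hne hle
  set L := Real.log (Fintype.card ι) + 1
  set H := h (P i₂)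
  have : 0 < L := by positivity
  have hH : 0 < H := lt_trans (by positivity) hlarge
  have hLH : L ≤ H := by nlinarith
  have hcard : (Finset.univ.erase i₁).card ≤ 2 * (2 * M) ^ k := by
    refine hh.card_le_of_isolated (ρ := H / (32 * c)) (R := 3 * c * H) hcov (by positivity)
      (fun j _ => (hbound j).trans ?_) (fun i j l hi hij hjl hil hj hl => ?_) (by positivity) ?_
    · calc c * (2 * H + L) ≤ c * (2 * H + H) := by gcongr
        _ = _ := by ring
    · have : H ≤ H / 4 + c * L := calc
        H ≤ h (P i) := hmin i (Finset.ne_of_mem_erase hi)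
        _ ≤ c * (h (P j - P i) + h (P l - P i) + L) := hs.le_of_sub_pair hij hjl hil
        _ ≤ c * (4 * (H / (32 * c)) + 4 * (H / (32 * c)) + L) := by gcongr
        _ = _ := by field_simp; ring
      nlinarith
    · have hcc : c ^ 2 ≤ c ^ 3 := pow_le_pow_right₀ hc (by norm_num)
      calc 2 * (3 * c * H) + 2 * (H / (32 * c)) = (192 * c ^ 2 + 2) * (H / (32 * c)) := by
            field_simp; ring
        _ ≤ 2 ^ k * (H / (32 * c)) := by gcongr; nlinarith
  have hpow : 1 ≤ (2 * M) ^ k := Nat.one_le_pow _ _ (by have := hcov.pos; lia)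
  rw [Finset.card_erase_of_mem (Finset.mem_univ _), Finset.card_univ] at hcard
  lia

-- If two terms have height `O(log N)`, all `N` terms do, and there are few such points.
-- Otherwise all heights but one lie in an interval `[H, 3cH]`, the terms repel each other, and
-- balls around them pack the ball of radius `O(cH)`.
theorem card_le (hs : IsHeightSpread h P c) (hh : IsQuadraticHeight h 0)
    (hgrowth : HasExpGrowth h c)
    (hcov : CoveredByClasses (fun P Q : A => Even (P - Q)) Set.univ M)
    (hP : Function.Injective P) (hc : 1 ≤ c) {k : ℕ} (hk : 224 * c ^ 3 ≤ 2 ^ k) :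
    (Fintype.card ι : ℝ) ≤ (2 ^ (2 * k) * c ^ 2 * Real.exp 1 + 3 * 2 ^ k) * M ^ (2 * k) := by
  have hM : (1 : ℝ) ≤ M := Nat.one_le_cast.mpr hcov.pos
  have large_le : (3 * (2 * M) ^ k : ℝ) ≤ 3 * 2 ^ k * M ^ (2 * k) := by
    rw [mul_pow, ← mul_assoc]
    gcongr
    lia
  have small_nonneg : 0 ≤ 2 ^ (2 * k) * c ^ 2 * Real.exp 1 * (M : ℝ) ^ (2 * k) := by positivity
  have large_nonneg : 0 ≤ 3 * 2 ^ k * (M : ℝ) ^ (2 * k) := by positivity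
  rw [add_mul]
  rcases lt_or_ge (Fintype.card ι) 2 with hι | hι
  · have hone : (1 : ℝ) ≤ (2 * M) ^ k := one_le_pow₀ (by linarith)
    have : (Fintype.card ι : ℝ) ≤ 1 := by exact_mod_cast Nat.lt_succ_iff.mp hι
    linarith
  obtain ⟨i₁, i₂, hne, hle, hmin⟩ := exists_two_smallest hι fun i => h (P i)
  rcases le_or_gt (h (P i₂)) (4 * c * (Real.log (Fintype.card ι) + 1)) with hsmall | hlarge
  · linarith [hs.card_le_of_height_le_log hh hgrowth hcov hP hc hk hne hle hsmall]
  · have : (Fintype.card ι : ℝ) ≤ 3 * (2 * M) ^ k := by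
      exact_mod_cast hs.card_le_of_log_lt_height hh hcov hc hk hne hle hmin hlarge
    linarith

end IsHeightSpread

/-! ### From Weil heights to canonical heights -/

namespace IsQuadraticHeight

open Filter

variable {A : Type*} [AddCommGroup A] {h : A → ℝ} {δ : ℝ}

theorem error_nonneg (hh : IsQuadraticHeight h δ) : 0 ≤ δ :=
  (abs_nonneg _).trans (hh.abs_parallelogram_le 0 0)

theorem abs_map_two_nsmul_sub_le (hh : IsQuadraticHeight h δ) (P : A) :
    |h (2 • P) - 4 * h P| ≤ 3 / 2 * δ := by
  have hzero := abs_le.mp (hh.abs_parallelogram_le 0 0)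
  have hdouble := abs_le.mp (hh.abs_parallelogram_le P P)
  rw [add_zero, sub_zero] at hzero
  rw [sub_self] at hdouble
  have := hh.nonneg 0
  rw [two_nsmul, abs_le]
  constructor <;> linarith

theorem dist_tate_succ_le (hh : IsQuadraticHeight h δ) (P : A) (n : ℕ) :
    dist (h (2 ^ n • P) / 4 ^ n) (h (2 ^ (n + 1) • P) / 4 ^ (n + 1)) ≤
      δ / 2 * (1 / 4) ^ n := by
  have hdouble := hh.abs_map_two_nsmul_sub_le (2 ^ n • P)
  rw [smul_smul, ← pow_succ'] at hdouble
  have hδ := hh.error_nonneg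
  have hdiff : h (2 ^ (n + 1) • P) / 4 ^ (n + 1) - h (2 ^ n • P) / 4 ^ n =
      (h (2 ^ (n + 1) • P) - 4 * h (2 ^ n • P)) / 4 ^ (n + 1) := by field_simp; ring
  rw [dist_comm, Real.dist_eq, hdiff, abs_div, abs_of_pos (by positivity : (0 : ℝ) < 4 ^ (n + 1)),
    div_le_iff₀ (by positivity)]
  calc |h (2 ^ (n + 1) • P) - 4 * h (2 ^ n • P)| ≤ 2 * δ := by linarith
    _ = δ / 2 * (1 / 4) ^ n * 4 ^ (n + 1) := by rw [div_pow]; field_simp; ring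

theorem tendsto_tate_parallelogram (hh : IsQuadraticHeight h δ) (P Q : A) :
    Tendsto (fun n : ℕ => h (2 ^ n • (P + Q)) / 4 ^ n + h (2 ^ n • (P - Q)) / 4 ^ n -
      (2 * (h (2 ^ n • P) / 4 ^ n) + 2 * (h (2 ^ n • Q) / 4 ^ n))) atTop (nhds 0) := by
  have hlim : Tendsto (fun n : ℕ => δ * (1 / 4 : ℝ) ^ n) atTop (nhds 0) := by
    simpa only [mul_zero] using (tendsto_pow_atTop_nhds_zero_of_lt_one (r := (1 / 4 : ℝ))
      (by norm_num) (by norm_num)).const_mul δ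
  refine squeeze_zero_norm (fun n => ?_) hlim
  have hpar := hh.abs_parallelogram_le (2 ^ n • P) (2 ^ n • Q)
  rw [← smul_add, ← smul_sub] at hpar
  calc _ = |(h (2 ^ n • (P + Q)) + h (2 ^ n • (P - Q)) -
          (2 * h (2 ^ n • P) + 2 * h (2 ^ n • Q))) * (1 / 4) ^ n| := by
        rw [Real.norm_eq_abs, div_pow, one_pow]; congr 1; ring
    _ ≤ δ * (1 / 4) ^ n := by
        rw [abs_mul, abs_of_pos (by positivity : (0 : ℝ) < (1 / 4) ^ n)]; gcongr

theorem exists_canonical (hh : IsQuadraticHeight h δ) :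
    ∃ g : A → ℝ, IsQuadraticHeight g 0 ∧ ∀ P, |g P - h P| ≤ δ := by
  have hconv : ∀ P, ∃ l, Tendsto (fun n : ℕ => h (2 ^ n • P) / 4 ^ n) atTop (nhds l) := fun P =>
    cauchySeq_tendsto_of_complete
      (cauchySeq_of_le_geometric _ _ (by norm_num) (hh.dist_tate_succ_le P))
  choose g hg using hconv
  have hdist : ∀ P, |g P - h P| ≤ δ := fun P => by
    have := dist_le_of_le_geometric_of_tendsto₀ _ _ (by norm_num) (hh.dist_tate_succ_le P) (hg P)
    rw [dist_comm, Real.dist_eq, pow_zero, pow_zero, one_smul, div_one] at this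
    refine this.trans ?_
    rw [div_le_iff₀ (by norm_num)]
    linarith [hh.error_nonneg]
  refine ⟨g, ⟨fun P => ?_, fun P Q => ?_, fun B => ?_⟩, hdist⟩
  · exact ge_of_tendsto' (hg P) fun n => div_nonneg (hh.nonneg _) (by positivity)
  · have := tendsto_nhds_unique (((hg (P + Q)).add (hg (P - Q))).sub
      (((hg P).const_mul 2).add ((hg Q).const_mul 2))) (hh.tendsto_tate_parallelogram P Q)
    rw [this, abs_zero]
  · refine (hh.finite_le (B + δ)).subset fun P (hP : g P ≤ B) => ?_
    exact (by linarith [abs_le.mp (hdist P)] : h P ≤ B + δ)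

end IsQuadraticHeight

theorem HasExpGrowth.of_abs_sub_le {X : Type*} {g h : X → ℝ} {c δ : ℝ} (hh : HasExpGrowth h c)
    (hfin : ∀ B, {x | h x ≤ B}.Finite) (hδ : 0 ≤ δ) (hgh : ∀ x, |g x - h x| ≤ δ) (hc : 0 ≤ c) :
    HasExpGrowth g (c * Real.exp (c * δ)) := by
  intro B hB
  have hsub : {x | g x ≤ B} ⊆ {x | h x ≤ B + δ} := fun x (hx : g x ≤ B) =>
    (by linarith [abs_le.mp (hgh x)] : h x ≤ B + δ)
  have hexp : c ≤ c * Real.exp (c * δ) :=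
    le_mul_of_one_le_right hc (Real.one_le_exp (by positivity))
  calc (countLE g B : ℝ) ≤ countLE h (B + δ) := by
        exact_mod_cast Set.ncard_le_ncard hsub (hfin _)
    _ ≤ c * Real.exp (c * (B + δ)) := hh _ (by positivity)
    _ = c * Real.exp (c * δ) * Real.exp (c * B) := by
        rw [mul_add, Real.exp_add]; ring
    _ ≤ _ := by gcongr

section Transfer

variable {A ι : Type*} [AddCommGroup A] [Fintype ι] {g h : A → ℝ} {P : ι → A} {c c' δ : ℝ}

theorem IsHeightSpread.of_abs_sub_le (hs : IsHeightSpread h P c) (hg : ∀ Q, 0 ≤ g Q)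
    (hgh : ∀ Q, |g Q - h Q| ≤ δ) (hc : 0 ≤ c) (hδ : 0 ≤ δ) (hc' : c + 2 * c * δ + δ ≤ c') :
    IsHeightSpread g P c' := by
  have transfer : ∀ x y z : A, h x ≤ c * (h y + h z + (Real.log (Fintype.card ι) + 1)) →
      g x ≤ c' * (g y + g z + (Real.log (Fintype.card ι) + 1)) := by
    intro x y z hx
    have hlog : 0 ≤ Real.log (Fintype.card ι) := Real.log_natCast_nonneg _
    set L := Real.log (Fintype.card ι) + 1
    have := hg y
    have := hg z
    have hL : 1 ≤ g y + g z + L := by linarith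
    calc g x ≤ h x + δ := by linarith [abs_le.mp (hgh x)]
      _ ≤ c * (h y + h z + L) + δ := by gcongr
      _ ≤ c * (g y + δ + (g z + δ) + L) + δ := by
          gcongr <;> linarith [abs_le.mp (hgh y), abs_le.mp (hgh z)]
      _ = c * (g y + g z + L) + (2 * c * δ + δ) * 1 := by ring
      _ ≤ c * (g y + g z + L) + (2 * c * δ + δ) * (g y + g z + L) := by gcongr
      _ = (c + 2 * c * δ + δ) * (g y + g z + L) := by ring
      _ ≤ c' * (g y + g z + L) := by gcongr
  exact ⟨fun i j k hij hjk hik => transfer _ _ _ (hs.le_of_pair hij hjk hik),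
    fun i j k hij hjk hik => transfer _ _ _ (hs.le_of_sub_pair hij hjk hik)⟩

theorem IsHeightSpread.card_le_of_weil (hs : IsHeightSpread h P c) (hh : IsQuadraticHeight h δ)
    (hgrowth : HasExpGrowth h c) {M : ℕ}
    (hcov : CoveredByClasses (fun P Q : A => Even (P - Q)) Set.univ M)
    (hP : Function.Injective P) (hc : 1 ≤ c) (hc' : c * Real.exp (c * δ) + 2 * c * δ + δ ≤ c')
    {k : ℕ} (hk : 224 * c' ^ 3 ≤ 2 ^ k) :
    (Fintype.card ι : ℝ) ≤ (2 ^ (2 * k) * c' ^ 2 * Real.exp 1 + 3 * 2 ^ k) * M ^ (2 * k) := by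
  obtain ⟨g, hg, hgh⟩ := hh.exists_canonical
  have hδ := hh.error_nonneg
  have hexp : c ≤ c * Real.exp (c * δ) :=
    le_mul_of_one_le_right (by positivity) (Real.one_le_exp (by positivity))
  have hcδ : 0 ≤ 2 * c * δ + δ := by positivity
  have hspread := hs.of_abs_sub_le (c' := c') hg.nonneg hgh (by positivity) hδ (by linarith)
  have hgrowth' := (hgrowth.of_abs_sub_le hh.finite_le hδ hgh (by positivity)).mono
    (c' := c') (by positivity) (by linarith)
  exact hspread.card_le hg hgrowth' hcov hP (by linarith) hk

end Transfer

/-! ### Points of the quadratic twists -/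

section Twist

open WeierstrassCurve WeierstrassCurve.Affine Height

/-- The group of rational points of the quadratic twist by `D` of `y² = x³ + ax + b`. -/
abbrev TwistPoint (a b : ℚ) (D : ℤ) : Type :=
  (quadTwist a b D).toAffine.Point

variable {a b : ℚ} {D : ℤ} {x y x₁ y₁ x₂ y₂ : ℚ}

theorem quadTwist_equation_iff : (quadTwist a b D).toAffine.Equation x y ↔
    y ^ 2 = x ^ 3 + a * D ^ 2 * x + b * D ^ 3 := by
  rw [Affine.equation_iff]
  simp [quadTwist]

theorem quadTwist_negY (x y : ℚ) : (quadTwist a b D).toAffine.negY x y = -y := by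
  simp [Affine.negY, quadTwist]

theorem quadTwist_addX (x₁ x₂ l : ℚ) :
    (quadTwist a b D).toAffine.addX x₁ x₂ l = l ^ 2 - x₁ - x₂ := by
  simp [Affine.addX, quadTwist]

theorem quadTwist_addY (x₁ x₂ y₁ l : ℚ) : (quadTwist a b D).toAffine.addY x₁ x₂ y₁ l =
    -(l * (l ^ 2 - x₁ - x₂ - x₁) + y₁) := by
  rw [Affine.addY, quadTwist_negY, Affine.negAddY, quadTwist_addX]

theorem quadTwist_Δ : (quadTwist a b D).Δ = -16 * (D : ℚ) ^ 6 * (4 * a ^ 3 + 27 * b ^ 2) := by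
  simp only [quadTwist, WeierstrassCurve.Δ, WeierstrassCurve.b₂, WeierstrassCurve.b₄,
    WeierstrassCurve.b₆, WeierstrassCurve.b₈]
  ring

theorem quadTwist_nonsingular_iff (hab : 4 * a ^ 3 + 27 * b ^ 2 ≠ 0) (hD : D ≠ 0) :
    (quadTwist a b D).toAffine.Nonsingular x y ↔ y ^ 2 = x ^ 3 + a * D ^ 2 * x + b * D ^ 3 := by
  have hΔ : (quadTwist a b D).Δ ≠ 0 := by
    have : (D : ℚ) ≠ 0 := Int.cast_ne_zero.mpr hD
    rw [quadTwist_Δ]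
    positivity
  rw [← quadTwist_equation_iff]
  exact (Affine.equation_iff_nonsingular_of_Δ_ne_zero hΔ).symm

theorem twistPoint_add_of_X_ne (h₁ : (quadTwist a b D).toAffine.Nonsingular x₁ y₁)
    (h₂ : (quadTwist a b D).toAffine.Nonsingular x₂ y₂) (hx : x₁ ≠ x₂) {l : ℚ}
    (hl : l = (y₁ - y₂) / (x₁ - x₂)) :
    ∃ h₃, (Point.some x₁ y₁ h₁ + Point.some x₂ y₂ h₂ : TwistPoint a b D) =
      Point.some (l ^ 2 - x₁ - x₂) (-(l * (l ^ 2 - x₁ - x₂ - x₁) + y₁)) h₃ := by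
  have hns := Affine.nonsingular_add h₁ h₂ fun h => hx h.1
  have hadd := Point.add_of_X_ne (h₁ := h₁) (h₂ := h₂) hx
  simp only [Affine.slope_of_X_ne hx, quadTwist_addX, quadTwist_addY, ← hl] at hns hadd
  exact ⟨hns, hadd⟩

theorem twistPoint_add_self (h : (quadTwist a b D).toAffine.Nonsingular x y) (hy : y ≠ 0) {l : ℚ}
    (hl : l = (3 * x ^ 2 + a * D ^ 2) / (2 * y)) :
    ∃ h₃, (Point.some x y h + Point.some x y h : TwistPoint a b D) =
      Point.some (l ^ 2 - x - x) (-(l * (l ^ 2 - x - x - x) + y)) h₃ := by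
  have hne : y ≠ (quadTwist a b D).toAffine.negY x y := by
    rw [quadTwist_negY]
    exact self_ne_neg.mpr hy
  have hslope : (quadTwist a b D).toAffine.slope x x y y = l := by
    rw [hl, Affine.slope_of_Y_ne rfl hne, quadTwist_negY]
    simp only [quadTwist]
    ring
  have hns := Affine.nonsingular_add h h fun h => hne h.2
  have hadd := Point.add_self_of_Y_ne (h₁ := h) hne
  simp only [hslope, quadTwist_addX, quadTwist_addY] at hns hadd
  exact ⟨hns, hadd⟩

theorem twistPoint_neg (h : (quadTwist a b D).toAffine.Nonsingular x y) :
    ∃ h', (-Point.some x y h : TwistPoint a b D) = Point.some x (-y) h' := by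
  have hns := (Affine.nonsingular_neg x y).mpr h
  rw [quadTwist_negY] at hns
  exact ⟨hns, by simp only [Point.neg_some, quadTwist_negY]⟩

/-! ### The height on the twists -/

/-- The projective `x`-coordinate on the model `D y² = x³ + ax + b` of the twist: using this model
rather than `y² = x³ + aD²x + bD³` makes the height comparisons below uniform in `D`. -/
def projX : TwistPoint a b D → Fin 2 → ℚ
  | .zero => ![1, 0]
  | .some x _ _ => ![x / D, 1]

theorem projX_some (h : (quadTwist a b D).toAffine.Nonsingular x y) :
    projX (Point.some x y h : TwistPoint a b D) = ![x / D, 1] := rfl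

theorem projX_ne_zero (P : TwistPoint a b D) : projX P ≠ 0 := by
  rcases P with _ | ⟨x, y, h⟩
  · exact fun h => one_ne_zero (congrFun h 0)
  · exact fun h => one_ne_zero (congrFun h 1)

theorem projX_neg (P : TwistPoint a b D) : projX (-P) = projX P := by
  rcases P with _ | ⟨x, y, h⟩
  · rfl
  · obtain ⟨h', hneg⟩ := twistPoint_neg h
    rw [hneg, projX_some, projX_some]

theorem eq_or_eq_neg_of_projX_eq (hD : D ≠ 0) {P Q : TwistPoint a b D}
    (hPQ : projX P = projX Q) : P = Q ∨ P = -Q := by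
  rcases P with _ | ⟨x, y, h⟩ <;> rcases Q with _ | ⟨x', y', h'⟩
  · exact Or.inl rfl
  · exact absurd (congrFun hPQ 1) zero_ne_one
  · exact absurd (congrFun hPQ 1) one_ne_zero
  · exact Point.X_eq_iff.mp ((div_left_inj' (Int.cast_ne_zero.mpr hD)).mp (congrFun hPQ 0))

/-- The Weil height of the `x`-coordinate on the model `D y² = x³ + ax + b`. -/
noncomputable def twistHeight (P : TwistPoint a b D) : ℝ :=
  logHeight (projX P)

theorem twistHeight_nonneg (P : TwistPoint a b D) : 0 ≤ twistHeight P :=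
  logHeight_nonneg _

theorem twistHeight_some (h : (quadTwist a b D).toAffine.Nonsingular x y) :
    twistHeight (Point.some x y h : TwistPoint a b D) = logHeight₁ (x / D) := by
  rw [twistHeight, projX_some, logHeight₁_eq_logHeight]

/-- The elementary symmetric functions of the projective `x`-coordinates of two points. -/
def symProjX (P Q : TwistPoint a b D) : Fin 3 → ℚ :=
  ![projX P 0 * projX Q 0, projX P 0 * projX Q 1 + projX P 1 * projX Q 0,
    projX P 1 * projX Q 1]

theorem symProjX_comm (P Q : TwistPoint a b D) : symProjX P Q = symProjX Q P := by
  simp only [symProjX, mul_comm, add_comm]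

theorem eval_addSubMap (a b : ℚ) (v : Fin 3 → ℚ) :
    (fun i => MvPolynomial.eval v (addSubMap (⟨0, 0, 0, a, b⟩ : WeierstrassCurve ℚ) i)) =
    ![v 0 ^ 2 - 2 * a * v 0 * v 2 - 4 * b * v 1 * v 2 + a ^ 2 * v 2 ^ 2,
      2 * v 1 * v 0 + 2 * a * v 1 * v 2 + 4 * b * v 2 ^ 2, v 1 ^ 2 - 4 * v 0 * v 2] := by
  ext i
  fin_cases i <;>
    simp [addSubMap, WeierstrassCurve.b₂, WeierstrassCurve.b₄, WeierstrassCurve.b₆,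
      WeierstrassCurve.b₈]

/-- The duplication-type formula `{x(P), x(Q)} ↦ {x(P + Q), x(P - Q)}`, projectively. -/
def AddSubFormula (P Q : TwistPoint a b D) : Prop :=
  ∃ t : ℚ, t ≠ 0 ∧ (fun i => MvPolynomial.eval (symProjX P Q)
    (addSubMap (⟨0, 0, 0, a, b⟩ : WeierstrassCurve ℚ) i)) = t • symProjX (P + Q) (P - Q)

theorem addSubFormula_zero_right (P : TwistPoint a b D) : AddSubFormula P 0 := by
  refine ⟨1, one_ne_zero, ?_⟩
  rw [eval_addSubMap, add_zero, sub_zero]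
  rcases P with _ | ⟨x, y, h⟩ <;> ext i <;> fin_cases i <;> simp [symProjX, projX] <;> ring

theorem AddSubFormula.symm {P Q : TwistPoint a b D} (h : AddSubFormula P Q) :
    AddSubFormula Q P := by
  obtain ⟨t, ht, heq⟩ := h
  refine ⟨t, ht, ?_⟩
  have hneg : symProjX (Q + P) (Q - P) = symProjX (P + Q) (P - Q) := by
    rw [add_comm, ← neg_sub P Q]
    simp only [symProjX, projX_neg]
  rw [symProjX_comm, heq, hneg]

theorem AddSubFormula.neg_right {P Q : TwistPoint a b D} (h : AddSubFormula P Q) :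
    AddSubFormula P (-Q) := by
  obtain ⟨t, ht, heq⟩ := h
  refine ⟨t, ht, ?_⟩
  have hneg : symProjX P (-Q) = symProjX P Q := by simp only [symProjX, projX_neg]
  rw [hneg, heq, sub_neg_eq_add, ← sub_eq_add_neg, symProjX_comm]

theorem addSubFormula_self_of_Y_eq_zero (hD : D ≠ 0)
    (h : (quadTwist a b D).toAffine.Nonsingular x 0) :
    AddSubFormula (Point.some x 0 h : TwistPoint a b D) (Point.some x 0 h) := by
  have hD' : (D : ℚ) ≠ 0 := Int.cast_ne_zero.mpr hD
  have hadd : (Point.some x 0 h + Point.some x 0 h : TwistPoint a b D) = 0 :=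
    Point.add_self_of_Y_eq (by rw [quadTwist_negY, neg_zero])
  have heq := quadTwist_equation_iff.mp h.1
  have hderiv : 3 * x ^ 2 + a * D ^ 2 ≠ 0 := by
    intro h0
    rcases ((Affine.nonsingular_iff x 0).mp h).2 with hX | hY
    · exact hX (by simp only [quadTwist]; linarith)
    · exact hY (by simp only [quadTwist]; ring)
  refine ⟨(3 * x ^ 2 + a * D ^ 2) ^ 2 / D ^ 4, by positivity, ?_⟩
  rw [eval_addSubMap, hadd, sub_self]
  ext i; fin_cases i <;> simp [symProjX, projX]
  · field_simp
    linear_combination (8 * x) * heq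
  · field_simp
    linear_combination (-4) * heq
  · ring

theorem addSubFormula_self_of_Y_ne_zero (hD : D ≠ 0)
    (h : (quadTwist a b D).toAffine.Nonsingular x y) (hy : y ≠ 0) :
    AddSubFormula (Point.some x y h : TwistPoint a b D) (Point.some x y h) := by
  have hD' : (D : ℚ) ≠ 0 := Int.cast_ne_zero.mpr hD
  obtain ⟨h₃, hadd⟩ := twistPoint_add_self h hy rfl
  have heq := quadTwist_equation_iff.mp h.1
  refine ⟨4 * y ^ 2 / D ^ 3, by positivity, ?_⟩
  rw [eval_addSubMap, hadd, sub_self]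
  ext i; fin_cases i <;> simp [symProjX, projX]
  · field_simp
    linear_combination (32 * x) * heq
  · field_simp
    linear_combination (-4) * heq
  · ring

theorem addSubFormula_self (hD : D ≠ 0) (P : TwistPoint a b D) : AddSubFormula P P := by
  rcases P with _ | ⟨x, y, h⟩
  · exact addSubFormula_zero_right 0
  rcases eq_or_ne y 0 with rfl | hy
  · exact addSubFormula_self_of_Y_eq_zero hD h
  · exact addSubFormula_self_of_Y_ne_zero hD h hy

theorem addSubFormula_of_X_ne (hD : D ≠ 0) (h₁ : (quadTwist a b D).toAffine.Nonsingular x₁ y₁)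
    (h₂ : (quadTwist a b D).toAffine.Nonsingular x₂ y₂) (hx : x₁ ≠ x₂) :
    AddSubFormula (Point.some x₁ y₁ h₁ : TwistPoint a b D) (Point.some x₂ y₂ h₂) := by
  have hD' : (D : ℚ) ≠ 0 := Int.cast_ne_zero.mpr hD
  have hx' : x₁ - x₂ ≠ 0 := sub_ne_zero.mpr hx
  obtain ⟨_, hadd⟩ := twistPoint_add_of_X_ne h₁ h₂ hx rfl
  obtain ⟨hneg, hneg_eq⟩ := twistPoint_neg h₂
  obtain ⟨_, hsub⟩ := twistPoint_add_of_X_ne h₁ hneg hx rfl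
  have heq₁ := quadTwist_equation_iff.mp h₁.1
  have heq₂ := quadTwist_equation_iff.mp h₂.1
  refine ⟨(x₁ - x₂) ^ 2 / D ^ 2, by positivity, ?_⟩
  rw [← hneg_eq, ← sub_eq_add_neg] at hsub
  rw [eval_addSubMap, hsub, hadd]
  ext i; fin_cases i <;> simp [symProjX, projX] <;> field_simp <;> ring_nf
  · rw [show y₁ ^ 4 = (y₁ ^ 2) ^ 2 by ring, show y₂ ^ 4 = (y₂ ^ 2) ^ 2 by ring, heq₁, heq₂]
    ring
  · rw [heq₁, heq₂]
    ring

theorem addSubFormula (hD : D ≠ 0) (P Q : TwistPoint a b D) : AddSubFormula P Q := by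
  by_cases hPQ : projX P = projX Q
  · rcases eq_or_eq_neg_of_projX_eq hD hPQ with rfl | rfl
    · exact addSubFormula_self hD P
    · exact (addSubFormula_self hD Q).neg_right.symm
  rcases P with _ | ⟨x₁, y₁, h₁⟩
  · exact (addSubFormula_zero_right Q).symm
  rcases Q with _ | ⟨x₂, y₂, h₂⟩
  · exact addSubFormula_zero_right _
  · exact addSubFormula_of_X_ne hD h₁ h₂ fun hx => hPQ (by rw [projX_some, projX_some, hx])

theorem exists_abs_twistHeight_parallelogram_le (hab : 4 * a ^ 3 + 27 * b ^ 2 ≠ 0) :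
    ∃ δ : ℝ, ∀ D : ℤ, D ≠ 0 → ∀ P Q : TwistPoint a b D,
      |twistHeight (P + Q) + twistHeight (P - Q) - (2 * twistHeight P + 2 * twistHeight Q)| ≤
        δ := by
  have : (⟨0, 0, 0, a, b⟩ : WeierstrassCurve ℚ).IsElliptic := by
    have hΔ := quadTwist_Δ (a := a) (b := b) (D := 1)
    simp only [quadTwist, Int.cast_one, one_pow, mul_one] at hΔ
    rw [WeierstrassCurve.isElliptic_iff, isUnit_iff_ne_zero, hΔ]
    positivity
  obtain ⟨C₁, hC₁⟩ := abs_logHeight_addSubMap_sub_two_mul_logHeight_le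
    (⟨0, 0, 0, a, b⟩ : WeierstrassCurve ℚ)
  obtain ⟨C₂, hC₂⟩ := abs_logHeight_sym2_sub_le ℚ
  refine ⟨C₁ + 3 * C₂, fun D hD P Q => ?_⟩
  have sym_bound : ∀ P Q : TwistPoint a b D,
      |logHeight (symProjX P Q) - (twistHeight P + twistHeight Q)| ≤ C₂ := by
    intro P Q
    have vec_eta : ∀ P : TwistPoint a b D, ![projX P 0, projX P 1] = projX P := fun P =>
      FinVec.etaExpand_eq (projX P)
    have hsym := hC₂ (vec_eta P ▸ projX_ne_zero P) (vec_eta Q ▸ projX_ne_zero Q)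
    rwa [vec_eta, vec_eta] at hsym
  obtain ⟨t, ht, hformula⟩ := addSubFormula hD P Q
  have hmap := hC₁ (symProjX P Q)
  rw [hformula, logHeight_smul_eq_logHeight _ ht] at hmap
  have hPQ := abs_le.mp (sym_bound P Q)
  have hsum := abs_le.mp (sym_bound (P + Q) (P - Q))
  have hmap' := abs_le.mp hmap
  rw [abs_le]
  constructor <;> linarith

/-! ### Counting points of bounded height -/

theorem finite_and_ncard_logHeight₁_le {B : ℝ} (hB : 0 ≤ B) :
    {q : ℚ | logHeight₁ q ≤ B}.Finite ∧
      ({q : ℚ | logHeight₁ q ≤ B}.ncard : ℝ) ≤ 3 * Real.exp (2 * B) := by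
  set n : ℕ := ⌊Real.exp B⌋₊
  let box : Finset (ℤ × ℕ) := Finset.Icc (-(n : ℤ)) n ×ˢ Finset.Icc 1 n
  let numDen : ℚ → ℤ × ℕ := fun q => (q.num, q.den)
  have hmaps : ∀ q ∈ {q : ℚ | logHeight₁ q ≤ B}, numDen q ∈ (box : Set (ℤ × ℕ)) := by
    intro q (hq : logHeight₁ q ≤ B)
    have hden := q.den_pos
    rw [Rat.logHeight₁_eq_log_max, Real.log_le_iff_le_exp (by positivity)] at hq
    have hmax : max q.num.natAbs q.den ≤ n := Nat.le_floor (by exact_mod_cast hq)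
    simp only [numDen, box, Finset.mem_coe, Finset.mem_product, Finset.mem_Icc]
    lia
  have hinj : Function.Injective numDen := fun q r hqr =>
    Rat.ext (congrArg Prod.fst hqr) (congrArg Prod.snd hqr)
  refine ⟨Set.Finite.of_finite_image (box.finite_toSet.subset (Set.image_subset_iff.mpr hmaps))
    hinj.injOn, ?_⟩
  have hcard : box.card = (2 * n + 1) * n := by
    simp only [box, Finset.card_product, Int.card_Icc, Nat.card_Icc]
    congr 1
    lia
  have hle := Set.ncard_le_ncard_of_injOn numDen hmaps hinj.injOn box.finite_toSet
  rw [Set.ncard_coe_finset, hcard] at hle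
  calc _ ≤ (2 * n + 1) * (n : ℝ) := by exact_mod_cast hle
    _ ≤ (2 * Real.exp B + Real.exp B) * Real.exp B := by
        have hfloor : (n : ℝ) ≤ Real.exp B := Nat.floor_le (Real.exp_pos _).le
        have := Real.one_le_exp hB
        gcongr
    _ = 3 * Real.exp (2 * B) := by rw [two_mul B, Real.exp_add]; ring

open Classical in
/-- A point is determined by its `x`-coordinate and the sign of its `y`-coordinate. -/
noncomputable def signedX : TwistPoint a b D → Option (ℚ × Bool)
  | .zero => none
  | .some x y _ => some (x / D, decide (0 ≤ y))

theorem signedX_injective (hD : D ≠ 0) :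
    Function.Injective (signedX : TwistPoint a b D → Option (ℚ × Bool)) := by
  intro P Q hPQ
  rcases P with _ | ⟨x, y, h⟩ <;> rcases Q with _ | ⟨x', y', h'⟩
  · rfl
  · cases hPQ
  · cases hPQ
  · simp only [signedX, Option.some.injEq, Prod.mk.injEq, decide_eq_decide] at hPQ
    obtain ⟨hx, hsign⟩ := hPQ
    obtain rfl : x = x' := (div_left_inj' (Int.cast_ne_zero.mpr hD)).mp hx
    have hsq : y ^ 2 = y' ^ 2 :=
      (quadTwist_equation_iff.mp h.1).trans (quadTwist_equation_iff.mp h'.1).symm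
    obtain rfl : y = y' := by
      rcases sq_eq_sq_iff_eq_or_eq_neg.mp hsq with hy | hy
      · exact hy
      · rcases le_total 0 y with _ | _ <;> grind
    rfl

theorem finite_and_countLE_twistHeight_le (hD : D ≠ 0) {B : ℝ} (hB : 0 ≤ B) :
    {P : TwistPoint a b D | twistHeight P ≤ B}.Finite ∧
      (countLE (twistHeight : TwistPoint a b D → ℝ) B : ℝ) ≤ 7 * Real.exp (2 * B) := by
  obtain ⟨hfin, hcard⟩ := finite_and_ncard_logHeight₁_le hB
  set S : Set (Option (ℚ × Bool)) :=
    insert none (some '' ({q : ℚ | logHeight₁ q ≤ B} ×ˢ Set.univ))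
  have hSfin : S.Finite := ((hfin.prod Set.finite_univ).image _).insert _
  have hScard : S.ncard ≤ {q : ℚ | logHeight₁ q ≤ B}.ncard * 2 + 1 := by
    refine (Set.ncard_insert_le _ _).trans (Nat.add_le_add_right ?_ 1)
    rw [Set.ncard_image_of_injective _ (Option.some_injective _), Set.ncard_prod, Set.ncard_univ,
      Nat.card_eq_fintype_card, Fintype.card_bool]
  have hmaps : ∀ P ∈ {P : TwistPoint a b D | twistHeight P ≤ B}, signedX P ∈ S := by
    rintro (_ | ⟨x, y, h⟩) hP
    · exact Set.mem_insert _ _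
    · exact Set.mem_insert_of_mem _ ⟨_, ⟨by rwa [Set.mem_ofPred_eq, twistHeight_some] at hP,
        trivial⟩, rfl⟩
  refine ⟨Set.Finite.of_finite_image (hSfin.subset (Set.image_subset_iff.mpr hmaps))
    (signedX_injective hD).injOn, ?_⟩
  have hle := (Set.ncard_le_ncard_of_injOn _ hmaps (signedX_injective hD).injOn hSfin).trans hScard
  have hexp := Real.one_le_exp (by positivity : 0 ≤ 2 * B)
  calc (countLE (twistHeight : TwistPoint a b D → ℝ) B : ℝ) ≤
        {q : ℚ | logHeight₁ q ≤ B}.ncard * 2 + 1 := by exact_mod_cast hle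
    _ ≤ 3 * Real.exp (2 * B) * 2 + Real.exp (2 * B) := by gcongr
    _ = _ := by ring

theorem hasExpGrowth_twistHeight (hD : D ≠ 0) :
    HasExpGrowth (twistHeight : TwistPoint a b D → ℝ) 7 := fun B hB =>
  (finite_and_countLE_twistHeight_le hD hB).2.trans (by gcongr; norm_num)

theorem exists_isQuadraticHeight_twistHeight (hab : 4 * a ^ 3 + 27 * b ^ 2 ≠ 0) :
    ∃ δ : ℝ, ∀ D : ℤ, D ≠ 0 → IsQuadraticHeight (twistHeight : TwistPoint a b D → ℝ) δ := by
  obtain ⟨δ, hδ⟩ := exists_abs_twistHeight_parallelogram_le hab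
  refine ⟨δ, fun D hD => ⟨twistHeight_nonneg, hδ D hD, fun B => ?_⟩⟩
  exact (finite_and_countLE_twistHeight_le hD (le_max_right B 0)).1.subset
    fun P (hP : twistHeight P ≤ B) => hP.trans (le_max_left B 0)

end Twist

/-! ### Heights of roots of polynomials -/

section Roots

open Height Polynomial

theorem logHeight₁_le_iff {q : ℚ} {T : ℝ} :
    logHeight₁ q ≤ T ↔ (q.num.natAbs : ℝ) ≤ Real.exp T ∧ (q.den : ℝ) ≤ Real.exp T := by
  have hpos : (0 : ℝ) < (max q.num.natAbs q.den : ℕ) :=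
    Nat.cast_pos.mpr (lt_max_of_lt_right q.den_pos)
  rw [Rat.logHeight₁_eq_log_max, Real.log_le_iff_le_exp hpos, Nat.cast_max, max_le_iff]

theorem logHeight₁_le_of_aeval_eq_zero_of_coeff_zero_ne_zero {Q : ℤ[X]} (hQ : Q.coeff 0 ≠ 0)
    {x : ℚ} (hx : aeval x Q = 0) {T : ℝ} (hT : ∀ i, ((Q.coeff i).natAbs : ℝ) ≤ Real.exp T) :
    logHeight₁ x ≤ T := by
  have hnum : x.num ∣ Q.coeff 0 :=
    (Rat.isFractionRingNum x).dvd_iff_dvd_left.mp (num_dvd_of_is_root hx)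
  have hden : (x.den : ℤ) ∣ Q.coeff Q.natDegree := by
    rw [← Rat.isFractionRingDen x, Int.natAbs_dvd]
    exact den_dvd_of_is_root hx
  have hlead : Q.coeff Q.natDegree ≠ 0 :=
    leadingCoeff_ne_zero.mpr fun h => hQ (by rw [h, coeff_zero])
  have natAbs_le {m n : ℤ} (hmn : m ∣ n) (hn : n ≠ 0) : m.natAbs ≤ n.natAbs :=
    Nat.le_of_dvd (Int.natAbs_pos.mpr hn) (Int.natAbs_dvd_natAbs.mpr hmn)
  refine logHeight₁_le_iff.mpr ⟨le_trans ?_ (hT 0), le_trans ?_ (hT Q.natDegree)⟩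
  · exact_mod_cast natAbs_le hnum hQ
  · exact_mod_cast natAbs_le hden hlead

theorem logHeight₁_le_of_aeval_eq_zero {P : ℤ[X]} (hP : P ≠ 0) {x : ℚ} (hx : aeval x P = 0)
    {T : ℝ} (hT0 : 0 ≤ T) (hT : ∀ i, ((P.coeff i).natAbs : ℝ) ≤ Real.exp T) :
    logHeight₁ x ≤ T := by
  rcases eq_or_ne x 0 with rfl | hx0
  · rwa [logHeight₁_zero]
  obtain ⟨Q, hPQ, hnd⟩ := exists_eq_pow_rootMultiplicity_mul_and_not_dvd P hP 0
  rw [C_0, sub_zero] at hPQ hnd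
  have hQx : aeval x Q = 0 := by
    rw [hPQ, map_mul, map_pow, aeval_X] at hx
    exact (mul_eq_zero.mp hx).resolve_left (pow_ne_zero _ hx0)
  refine logHeight₁_le_of_aeval_eq_zero_of_coeff_zero_ne_zero (by rwa [Ne, ← X_dvd_iff]) hQx
    fun i => ?_
  have hcoeff : Q.coeff i = P.coeff (i + P.rootMultiplicity 0) := by
    simpa only [coeff_X_pow_mul] using
      (congrArg (coeff · (i + P.rootMultiplicity 0)) hPQ).symm
  exact hcoeff ▸ hT _

theorem exists_intCast_eq_mul_of_logHeight₁_le {q : ℚ} {m : ℕ} {S T : ℝ} (hm : m ≠ 0)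
    (hdvd : q.den ∣ m) (hmS : (m : ℝ) ≤ Real.exp S) (hq : logHeight₁ q ≤ T) :
    ∃ z : ℤ, (z : ℚ) = m * q ∧ (z.natAbs : ℝ) ≤ Real.exp (S + T) := by
  obtain ⟨e, rfl⟩ := hdvd
  have hem : (e : ℝ) ≤ Real.exp S :=
    le_trans (mod_cast Nat.le_mul_of_pos_left e q.den_pos) hmS
  refine ⟨e * q.num, ?_, ?_⟩
  · push_cast
    rw [← Rat.mul_den_eq_num q]
    ring
  · rw [Int.natAbs_mul, Int.natAbs_natCast, Nat.cast_mul, Real.exp_add]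
    exact mul_le_mul hem (logHeight₁_le_iff.mp hq).1 (by positivity) (by positivity)

theorem exists_map_eq_C_mul_of_logHeight₁_coeff_le {p : ℚ[X]} {T : ℝ}
    (hT : ∀ i, logHeight₁ (p.coeff i) ≤ T) :
    ∃ (P : ℤ[X]) (m : ℚ), m ≠ 0 ∧ P.map (Int.castRingHom ℚ) = C m * p ∧
      ∀ i, ((P.coeff i).natAbs : ℝ) ≤ Real.exp ((p.natDegree + 2) * T) := by
  set m : ℕ := ∏ i ∈ Finset.range (p.natDegree + 1), (p.coeff i).den with hm
  have hm0 : m ≠ 0 := Finset.prod_ne_zero_iff.mpr fun i _ => (p.coeff i).den_ne_zero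
  have hmle : (m : ℝ) ≤ Real.exp ((p.natDegree + 1) * T) := by
    calc (m : ℝ) = ∏ i ∈ Finset.range (p.natDegree + 1), ((p.coeff i).den : ℝ) := by
          rw [hm, Nat.cast_prod]
      _ ≤ ∏ _i ∈ Finset.range (p.natDegree + 1), Real.exp T :=
          Finset.prod_le_prod (fun _ _ => by positivity) fun i _ => (logHeight₁_le_iff.mp (hT i)).2
      _ = Real.exp ((p.natDegree + 1) * T) := by
          rw [Finset.prod_const, Finset.card_range, ← Real.exp_nat_mul]
          norm_cast
  have hdvd (i : ℕ) : (p.coeff i).den ∣ m := by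
    rcases le_or_gt i p.natDegree with hi | hi
    · exact Finset.dvd_prod_of_mem _ (Finset.mem_range_succ_iff.mpr hi)
    · simp [coeff_eq_zero_of_natDegree_lt hi]
  choose z hz hzle using fun i =>
    exists_intCast_eq_mul_of_logHeight₁_le hm0 (hdvd i) hmle (hT i)
  have hcoeff (i : ℕ) :
      (∑ j ∈ Finset.range (p.natDegree + 1), monomial j (z j)).coeff i = z i := by
    rw [finsetSum_coeff]
    simp only [coeff_monomial, Finset.sum_ite_eq', Finset.mem_range_succ_iff, ite_eq_left_iff]
    intro hi
    have := hz i
    rw [coeff_eq_zero_of_natDegree_lt (not_le.mp hi), mul_zero] at this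
    exact_mod_cast this.symm
  refine ⟨∑ j ∈ Finset.range (p.natDegree + 1), monomial j (z j), m, mod_cast hm0, ?_, ?_⟩
  · ext i
    rw [coeff_map, hcoeff, coeff_C_mul, ← hz, eq_intCast]
  · intro i
    rw [hcoeff]
    exact (hzle i).trans_eq (by ring_nf)

theorem logHeight₁_le_of_isRoot {p : ℚ[X]} (hp : p ≠ 0) {x : ℚ} (hx : p.IsRoot x) {T : ℝ}
    (hT : ∀ i, logHeight₁ (p.coeff i) ≤ T) :
    logHeight₁ x ≤ (p.natDegree + 2) * T := by
  obtain ⟨P, m, hm, hmap, hle⟩ := exists_map_eq_C_mul_of_logHeight₁_coeff_le hT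
  have hT0 : 0 ≤ T := (zero_le_logHeight₁ _).trans (hT 0)
  refine logHeight₁_le_of_aeval_eq_zero ?_ ?_ (by positivity) hle
  · rintro rfl
    rw [Polynomial.map_zero] at hmap
    exact mul_ne_zero (C_ne_zero.mpr hm) hp hmap.symm
  · rw [aeval_def, ← eval_map, algebraMap_int_eq, hmap, eval_mul, hx.eq_zero, mul_zero]

variable {σ : Type*} [Fintype σ]

theorem one_le_one_add_sum_logHeight₁ (u : σ → ℚ) : 1 ≤ 1 + ∑ i, logHeight₁ (u i) :=
  le_add_of_nonneg_right (Finset.sum_nonneg fun _ _ => zero_le_logHeight₁ _)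

theorem exists_logHeight₁_eval_le (p : MvPolynomial σ ℚ) :
    ∃ c : ℝ, 0 ≤ c ∧ ∀ u : σ → ℚ,
      logHeight₁ (MvPolynomial.eval u p) ≤ c * (1 + ∑ i, logHeight₁ (u i)) := by
  induction p using MvPolynomial.induction_on with
  | C q =>
    refine ⟨logHeight₁ q, zero_le_logHeight₁ q, fun u => ?_⟩
    rw [MvPolynomial.eval_C]
    exact le_mul_of_one_le_right (zero_le_logHeight₁ q) (one_le_one_add_sum_logHeight₁ u)
  | add p q hp hq =>
    obtain ⟨c, hc, hpc⟩ := hp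
    obtain ⟨d, hd, hqd⟩ := hq
    set t : ℝ := totalWeight ℚ * Real.log 2
    have ht : 0 ≤ t := by positivity
    refine ⟨t + c + d, by positivity, fun u => ?_⟩
    rw [map_add]
    have hadd : logHeight₁ (MvPolynomial.eval u p + MvPolynomial.eval u q) ≤
      t + logHeight₁ (MvPolynomial.eval u p) + logHeight₁ (MvPolynomial.eval u q) :=
      logHeight₁_add_le _ _
    linarith [hpc u, hqd u, le_mul_of_one_le_right ht (one_le_one_add_sum_logHeight₁ u)]
  | mul_X p i hp =>
    obtain ⟨c, hc, hpc⟩ := hp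
    refine ⟨c + 1, by positivity, fun u => ?_⟩
    rw [map_mul, MvPolynomial.eval_X]
    have hui : logHeight₁ (u i) ≤ ∑ i, logHeight₁ (u i) :=
      Finset.single_le_sum (fun j _ => zero_le_logHeight₁ (u j)) (Finset.mem_univ i)
    linarith [logHeight₁_mul_le (MvPolynomial.eval u p) (u i), hpc u]

theorem exists_logHeight₁_le_of_isRoot_map_eval (F : (MvPolynomial σ ℚ)[X]) :
    ∃ c : ℝ, 0 ≤ c ∧ ∀ (u : σ → ℚ) (x : ℚ), F.map (MvPolynomial.eval u) ≠ 0 →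
      (F.map (MvPolynomial.eval u)).IsRoot x → logHeight₁ x ≤ c * (1 + ∑ i, logHeight₁ (u i)) := by
  choose c hc hle using fun n => exists_logHeight₁_eval_le (F.coeff n)
  set C : ℝ := ∑ n ∈ F.support, c n
  have hC : 0 ≤ C := Finset.sum_nonneg fun n _ => hc n
  refine ⟨(F.natDegree + 2) * C, by positivity, fun u x h0 hx => ?_⟩
  set W : ℝ := 1 + ∑ i, logHeight₁ (u i)
  have : 0 ≤ W := zero_le_one.trans (one_le_one_add_sum_logHeight₁ u)
  have hcoeff (n : ℕ) : logHeight₁ ((F.map (MvPolynomial.eval u)).coeff n) ≤ C * W := by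
    rw [coeff_map]
    by_cases hn : n ∈ F.support
    · refine (hle n u).trans ?_
      gcongr
      exact Finset.single_le_sum (fun m _ => hc m) hn
    · rw [notMem_support_iff.mp hn, map_zero, logHeight₁_zero]
      positivity
  calc logHeight₁ x ≤ ((F.map (MvPolynomial.eval u)).natDegree + 2) * (C * W) :=
        logHeight₁_le_of_isRoot h0 hx hcoeff
    _ ≤ (F.natDegree + 2) * (C * W) := by
        gcongr
        exact natDegree_map_le
    _ = _ := (mul_assoc _ _ _).symm

end Roots

/-! ### Elimination polynomials -/

section Elimination

open Height Polynomial

variable {R S : Type*} [CommRing R] [CommRing S]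

/-- The right-hand side `x³ + ax + b` of the Weierstrass equation, as a function on any ring; its
value at `Polynomial.X` is the cubic polynomial itself. -/
def cubic (a b x : R) : R :=
  x ^ 3 + a * x + b

/-- On `d y² = x³ + ax + b` the point `(x, y) + (q, s)` has `x`-coordinate `x₃` with
`x₃ (x - q)² = addXNum a b x q - 2 d y s`. -/
def addXNum (a b x q : R) : R :=
  (x * q + a) * (x + q) + 2 * b

/-- On `d y² = x³ + ax + b` the point `(x, y) + (q, s)` has `y`-coordinate `y₃` with
`y₃ (x - q)³ = s * addYNum a b x q - y * addYNum a b q x`. -/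
def addYNum (a b x q : R) : R :=
  x ^ 3 + 3 * x ^ 2 * q + 3 * a * x + a * q + 4 * b

/-- The expression `d (B s M + C w N)²`, written in terms of `f = d s²`, `g = d w²` and `v = d s w`,
which no longer involves the square roots `s` and `w`. -/
def rationalizedSq (B C f g v M N : R) : R :=
  B ^ 2 * f * M ^ 2 + 2 * B * C * v * M * N + C ^ 2 * g * N ^ 2

theorem rationalizedSq_eq (B C d s w M N : R) :
    rationalizedSq B C (d * s ^ 2) (d * w ^ 2) (d * s * w) M N =
      d * (B * s * M + C * w * N) ^ 2 := by
  unfold rationalizedSq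
  ring

/-- Vanishes at the `x`-coordinate of a point whose `y`-coordinate satisfies a linear relation
`A y + B s + C w = 0` with the points `(q, s)` and `(r, w)` of `d y² = x³ + ax + b`. -/
def elimY (a b A B C q r v x : R) : R :=
  A ^ 2 * cubic a b x - rationalizedSq B C (cubic a b q) (cubic a b r) v 1 1

/-- Vanishes at the `x`-coordinate of a point `P` of `d y² = x³ + ax + b` when the `x`-coordinates
of `P`, `P + (q, s)` and `P + (r, w)` satisfy a linear relation with coefficients `A, B, C`. -/
def elimAddX (a b A B C q r v x : R) : R :=
  (A * x * (x - q) ^ 2 * (x - r) ^ 2 + B * addXNum a b x q * (x - r) ^ 2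
      + C * addXNum a b x r * (x - q) ^ 2) ^ 2
    - 4 * cubic a b x *
      rationalizedSq B C (cubic a b q) (cubic a b r) v ((x - r) ^ 2) ((x - q) ^ 2)

/-- Vanishes at the `x`-coordinate of a point `P` of `d y² = x³ + ax + b` when the `y`-coordinates
of `P`, `P + (q, s)` and `P + (r, w)` satisfy a linear relation with coefficients `A, B, C`. -/
def elimAddY (a b A B C q r v x : R) : R :=
  (A * (x - q) ^ 3 * (x - r) ^ 3 - B * addYNum a b q x * (x - r) ^ 3
      - C * addYNum a b r x * (x - q) ^ 3) ^ 2 * cubic a b x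
    - rationalizedSq B C (cubic a b q) (cubic a b r) v
      (addYNum a b x q * (x - r) ^ 3) (addYNum a b x r * (x - q) ^ 3)

/-- The product of the relations that an `x`-coordinate of a point of an arithmetic progression can
satisfy; the first factor belongs to progressions of `x`-coordinates. -/
def elimProd (a b A B C q r v x : R) : R :=
  (A * x + B * q + C * r) * elimY a b A B C q r v x * elimAddX a b A B C q r v x *
    elimAddY a b A B C q r v x

theorem map_elimProd (φ : R →+* S) (a b A B C q r v x : R) :
    φ (elimProd a b A B C q r v x) =
      elimProd (φ a) (φ b) (φ A) (φ B) (φ C) (φ q) (φ r) (φ v) (φ x) := by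
  simp only [elimProd, elimY, elimAddX, elimAddY, rationalizedSq, cubic, addXNum, addYNum, map_add,
    map_sub, map_mul, map_pow, map_one, map_ofNat]

theorem coeff_elimY (a b A B C' q r v : R) :
    (elimY (C a) (C b) (C A) (C B) (C C') (C q) (C r) (C v) X).coeff 3 = A ^ 2 := by
  nontriviality R
  unfold elimY rationalizedSq cubic
  compute_degree!

theorem coeff_elimAddX (a b A B C' q r v : R) :
    (elimAddX (C a) (C b) (C A) (C B) (C C') (C q) (C r) (C v) X).coeff 10 = A ^ 2 := by
  nontriviality R
  unfold elimAddX rationalizedSq cubic addXNum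
  compute_degree!

theorem coeff_elimAddY (a b A B C' q r v : R) :
    (elimAddY (C a) (C b) (C A) (C B) (C C') (C q) (C r) (C v) X).coeff 15 = A ^ 2 := by
  nontriviality R
  unfold elimAddY rationalizedSq cubic addYNum
  compute_degree!

theorem elimProd_X_ne_zero [IsDomain R] {A : R} (hA : A ≠ 0) (a b B C' q r v : R) :
    elimProd (C a) (C b) (C A) (C B) (C C') (C q) (C r) (C v) X ≠ 0 := by
  have ne_zero_of_coeff {p : R[X]} (n : ℕ) {c : R} (hp : p.coeff n = c) (hc : c ≠ 0) : p ≠ 0 := by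
    rintro rfl
    exact hc hp.symm
  have hA2 : A ^ 2 ≠ 0 := pow_ne_zero 2 hA
  refine mul_ne_zero (mul_ne_zero (mul_ne_zero ?_ ?_) ?_) ?_
  · refine ne_zero_of_coeff 1 ?_ hA
    compute_degree!
  · exact ne_zero_of_coeff 3 (coeff_elimY a b A B C' q r v) hA2
  · exact ne_zero_of_coeff 10 (coeff_elimAddX a b A B C' q r v) hA2
  · exact ne_zero_of_coeff 15 (coeff_elimAddY a b A B C' q r v) hA2

theorem exists_logHeight₁_le_of_sq_eq_cubic_mul (a b : ℚ) : ∃ c : ℝ, 0 ≤ c ∧ ∀ {q r v : ℚ},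
    v ^ 2 = cubic a b q * cubic a b r →
      logHeight₁ v ≤ c * (1 + logHeight₁ q + logHeight₁ r) := by
  let p (i : Fin 2) : MvPolynomial (Fin 2) ℚ :=
    cubic (MvPolynomial.C a) (MvPolynomial.C b) (MvPolynomial.X i)
  obtain ⟨c, hc, hle⟩ := exists_logHeight₁_eval_le (p 0 * p 1)
  refine ⟨c, hc, fun {q r v} hv => ?_⟩
  have heval : MvPolynomial.eval ![q, r] (p 0 * p 1) = v ^ 2 := by
    simp [p, hv, cubic]
  have h := hle ![q, r]
  rw [heval, logHeight₁_pow, Fin.sum_univ_two] at h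
  simp only [Matrix.cons_val_zero, Matrix.cons_val_one] at h
  push_cast at h
  linarith [zero_le_logHeight₁ v]

theorem exists_logHeight₁_le_of_elimProd_eq_zero (a b : ℚ) : ∃ c : ℝ, 0 ≤ c ∧
    ∀ {A B C q r v x : ℚ}, A ≠ 0 → v ^ 2 = cubic a b q * cubic a b r →
      elimProd a b A B C q r v x = 0 → logHeight₁ x ≤ c *
        (1 + logHeight₁ A + logHeight₁ B + logHeight₁ C + logHeight₁ q + logHeight₁ r) := by
  let t (i : Fin 6) : (MvPolynomial (Fin 6) ℚ)[X] := Polynomial.C (MvPolynomial.X i)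
  let F : (MvPolynomial (Fin 6) ℚ)[X] := elimProd (Polynomial.C (MvPolynomial.C a))
    (Polynomial.C (MvPolynomial.C b)) (t 0) (t 1) (t 2) (t 3) (t 4) (t 5) X
  obtain ⟨c, hc, hF⟩ := exists_logHeight₁_le_of_isRoot_map_eval F
  obtain ⟨e, he, hve⟩ := exists_logHeight₁_le_of_sq_eq_cubic_mul a b
  refine ⟨c * (1 + e), by positivity, fun {A B C q r v x} hA hv hx => ?_⟩
  have hmap : F.map (MvPolynomial.eval ![A, B, C, q, r, v]) =
      elimProd (Polynomial.C a) (Polynomial.C b) (Polynomial.C A) (Polynomial.C B) (Polynomial.C C)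
        (Polynomial.C q) (Polynomial.C r) (Polynomial.C v) X := by
    rw [← coe_mapRingHom, map_elimProd]
    simp [t]
  have hroot : (F.map (MvPolynomial.eval ![A, B, C, q, r, v])).IsRoot x := by
    rw [hmap, IsRoot, ← coe_evalRingHom, map_elimProd]
    simpa using hx
  refine (hF _ x (hmap ▸ elimProd_X_ne_zero hA a b B C q r v) hroot).trans ?_
  rw [mul_assoc]
  refine mul_le_mul_of_nonneg_left ?_ hc
  set W := 1 + logHeight₁ A + logHeight₁ B + logHeight₁ C + logHeight₁ q + logHeight₁ r
  have hqr : 1 + logHeight₁ q + logHeight₁ r ≤ W := by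
    linarith [zero_le_logHeight₁ A, zero_le_logHeight₁ B, zero_le_logHeight₁ C]
  calc 1 + ∑ i, logHeight₁ (![A, B, C, q, r, v] i) = W + logHeight₁ v := by
        rw [Fin.sum_univ_six]
        simp only [W, Matrix.cons_val]
        ring
    _ ≤ W + e * W := by
        gcongr
        exact (hve hv).trans (by gcongr)
    _ = (1 + e) * W := by ring

end Elimination

/-! ### Heights along arithmetic progressions -/

section EliminationIdentities

variable {R : Type*} [CommRing R] {a b d x y q s r w A B C : R}

theorem elimProd_eq_zero_of_X_relation (v : R) (h : A * x + B * q + C * r = 0) :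
    elimProd a b A B C q r v x = 0 := by
  rw [elimProd, h, zero_mul, zero_mul, zero_mul]

theorem elimProd_eq_zero_of_Y_relation (hx : d * y ^ 2 = cubic a b x)
    (hq : d * s ^ 2 = cubic a b q) (hr : d * w ^ 2 = cubic a b r) (h : A * y + B * s + C * w = 0) :
    elimProd a b A B C q r (d * s * w) x = 0 := by
  have : elimY a b A B C q r (d * s * w) x = 0 := by
    rw [elimY, ← hx, ← hq, ← hr, rationalizedSq_eq]
    linear_combination d * (A * y - B * s - C * w) * h
  rw [elimProd, this, mul_zero, zero_mul, zero_mul]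

theorem elimProd_eq_zero_of_add_X_relation (hx : d * y ^ 2 = cubic a b x)
    (hq : d * s ^ 2 = cubic a b q) (hr : d * w ^ 2 = cubic a b r) {x₁ x₂ : R}
    (hx₁ : x₁ * (x - q) ^ 2 = addXNum a b x q - 2 * d * y * s)
    (hx₂ : x₂ * (x - r) ^ 2 = addXNum a b x r - 2 * d * y * w) (h : A * x + B * x₁ + C * x₂ = 0) :
    elimProd a b A B C q r (d * s * w) x = 0 := by
  have hlin : A * x * (x - q) ^ 2 * (x - r) ^ 2 + B * addXNum a b x q * (x - r) ^ 2
      + C * addXNum a b x r * (x - q) ^ 2 =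
      2 * d * y * (B * s * (x - r) ^ 2 + C * w * (x - q) ^ 2) := by
    linear_combination (x - q) ^ 2 * (x - r) ^ 2 * h - B * (x - r) ^ 2 * hx₁
      - C * (x - q) ^ 2 * hx₂
  have : elimAddX a b A B C q r (d * s * w) x = 0 := by
    rw [elimAddX, hlin, ← hx, ← hq, ← hr, rationalizedSq_eq]
    ring
  rw [elimProd, this, mul_zero, zero_mul]

theorem elimProd_eq_zero_of_add_Y_relation (hx : d * y ^ 2 = cubic a b x)
    (hq : d * s ^ 2 = cubic a b q) (hr : d * w ^ 2 = cubic a b r) {y₁ y₂ : R}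
    (hy₁ : y₁ * (x - q) ^ 3 = s * addYNum a b x q - y * addYNum a b q x)
    (hy₂ : y₂ * (x - r) ^ 3 = w * addYNum a b x r - y * addYNum a b r x)
    (h : A * y + B * y₁ + C * y₂ = 0) :
    elimProd a b A B C q r (d * s * w) x = 0 := by
  have hlin : (A * (x - q) ^ 3 * (x - r) ^ 3 - B * addYNum a b q x * (x - r) ^ 3
      - C * addYNum a b r x * (x - q) ^ 3) * y =
      -(B * s * (addYNum a b x q * (x - r) ^ 3) + C * w * (addYNum a b x r * (x - q) ^ 3)) := by
    linear_combination (x - q) ^ 3 * (x - r) ^ 3 * h - B * (x - r) ^ 3 * hy₁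
      - C * (x - q) ^ 3 * hy₂
  have : elimAddY a b A B C q r (d * s * w) x = 0 := by
    rw [elimAddY, ← hx, ← hq, ← hr, rationalizedSq_eq, mul_left_comm, ← mul_pow, hlin]
    ring
  rw [elimProd, this, mul_zero]

theorem scaled_add_eq_of_slope (hx : d * y ^ 2 = cubic a b x)
    (hq : d * s ^ 2 = cubic a b q) {x₃ y₃ l : R} (hl : l * (x - q) = y - s)
    (hx₃ : x₃ = d * l ^ 2 - x - q) (hy₃ : y₃ = -(l * (x₃ - x) + y)) :
    x₃ * (x - q) ^ 2 = addXNum a b x q - 2 * d * y * s ∧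
      y₃ * (x - q) ^ 3 = s * addYNum a b x q - y * addYNum a b q x := by
  have hl2 : d * (l * (x - q)) ^ 2 = d * (y - s) ^ 2 := by rw [hl]
  have hl3 : d * (l * (x - q)) ^ 3 = d * (y - s) ^ 3 := by rw [hl]
  rw [hy₃, hx₃]
  unfold cubic at hx hq
  unfold addXNum addYNum
  constructor
  · linear_combination hl2 + hx + hq
  · linear_combination (-1) * hl3 + (2 * x + q) * (x - q) ^ 2 * hl + (3 * s - y) * hx +
      (s - 3 * y) * hq

end EliminationIdentities

section Progressions

open WeierstrassCurve WeierstrassCurve.Affine Height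

variable {N : ℕ}

theorem _root_.IsNontrivAP.linear_relation {F : Type*} [Field F] {u : Fin N → F} (h : IsNontrivAP u)
    (i j k : Fin N) :
    (((i : ℕ) : F) - (j : ℕ)) * u k + (((j : ℕ) : F) - (k : ℕ)) * u i +
      (((k : ℕ) : F) - (i : ℕ)) * u j = 0 := by
  obtain ⟨α, β, -, hu⟩ := h
  rw [hu, hu, hu]
  push_cast
  ring

theorem _root_.IsNontrivAP.injective {F : Type*} [Field F] [CharZero F] {u : Fin N → F}
    (h : IsNontrivAP u) : Function.Injective u := by
  obtain ⟨α, β, hβ, hu⟩ := h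
  intro i j hij
  rw [hu, hu, add_right_inj, mul_left_inj' hβ, Nat.cast_inj, Nat.add_right_cancel_iff] at hij
  exact Fin.ext hij

theorem logHeight₁_natCast_sub_natCast_le (i j : Fin N) :
    logHeight₁ (((i : ℕ) : ℚ) - (j : ℕ)) ≤ Real.log N := by
  have hsub : ((i : ℕ) : ℚ) - (j : ℕ) = ((i : ℤ) - (j : ℤ) : ℤ) := by
    push_cast
    rfl
  rw [hsub, logHeight₁_le_iff, Rat.num_intCast, Rat.den_intCast,
    Real.exp_log (Nat.cast_pos.mpr i.pos)]
  exact ⟨mod_cast (by omega : ((i : ℤ) - (j : ℤ)).natAbs ≤ N), mod_cast i.pos⟩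

theorem natCast_sub_natCast_ne_zero {i j : Fin N} (h : i ≠ j) : ((i : ℕ) : ℚ) - (j : ℕ) ≠ 0 :=
  sub_ne_zero.mpr fun e => h (Fin.ext (mod_cast e))

variable {a b : ℚ} {D : ℤ}

theorem quadTwist_scaled_equation (hD : D ≠ 0) {x y : ℚ}
    (h : (quadTwist a b D).toAffine.Nonsingular x y) :
    (D : ℚ) * (y / D ^ 2) ^ 2 = cubic a b (x / D) := by
  have hD' : (D : ℚ) ≠ 0 := Int.cast_ne_zero.mpr hD
  have := quadTwist_equation_iff.mp h.1
  unfold cubic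
  field_simp
  linear_combination this

theorem twistPoint_scaled_add (hD : D ≠ 0) {x y q s x₃ y₃ : ℚ}
    (h : (quadTwist a b D).toAffine.Nonsingular x y)
    (hQ : (quadTwist a b D).toAffine.Nonsingular q s)
    (h₃ : (quadTwist a b D).toAffine.Nonsingular x₃ y₃) (hx : x ≠ q)
    (hadd : (Point.some x y h + Point.some q s hQ : TwistPoint a b D) = Point.some x₃ y₃ h₃) :
    (x₃ / D) * (x / D - q / D) ^ 2 =
        addXNum a b (x / D) (q / D) - 2 * D * (y / D ^ 2) * (s / D ^ 2) ∧
      (y₃ / D ^ 2) * (x / D - q / D) ^ 3 =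
        (s / D ^ 2) * addYNum a b (x / D) (q / D) - (y / D ^ 2) * addYNum a b (q / D) (x / D) := by
  have hD' : (D : ℚ) ≠ 0 := Int.cast_ne_zero.mpr hD
  have hxq : x - q ≠ 0 := sub_ne_zero.mpr hx
  obtain ⟨_, hsum⟩ := twistPoint_add_of_X_ne h hQ hx rfl
  rw [hadd] at hsum
  obtain ⟨hx₃, hy₃⟩ := (Point.some.injEq _ _ _ _ _ _).mp hsum
  refine scaled_add_eq_of_slope (l := (y - s) / (x - q) / D) (quadTwist_scaled_equation hD h)
    (quadTwist_scaled_equation hD hQ) (by field_simp) ?_ ?_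
  · rw [hx₃]
    field_simp
  · rw [hy₃, ← hx₃]
    field_simp

theorem exists_twistHeight_le_of_elimProd_eq_zero (a b : ℚ) : ∃ c : ℝ, 0 ≤ c ∧
    ∀ {D : ℤ}, D ≠ 0 → ∀ {x y q s r w : ℚ} (h : (quadTwist a b D).toAffine.Nonsingular x y)
      (hQ : (quadTwist a b D).toAffine.Nonsingular q s)
      (hR : (quadTwist a b D).toAffine.Nonsingular r w) {N : ℕ} {i j k : Fin N}, i ≠ j →
      elimProd a b (((i : ℕ) : ℚ) - (j : ℕ)) (((j : ℕ) : ℚ) - (k : ℕ)) (((k : ℕ) : ℚ) - (i : ℕ))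
        (q / D) (r / D) (D * (s / D ^ 2) * (w / D ^ 2)) (x / D) = 0 →
      twistHeight (Point.some x y h) ≤
        c * (twistHeight (Point.some q s hQ) + twistHeight (Point.some r w hR) +
          (Real.log N + 1)) := by
  obtain ⟨c, hc, hle⟩ := exists_logHeight₁_le_of_elimProd_eq_zero a b
  refine ⟨c * 3, by positivity, fun {D} hD {x y q s r w} h hQ hR {N i j k} hij helim => ?_⟩
  have hv : (D * (s / D ^ 2) * (w / D ^ 2) : ℚ) ^ 2 = cubic a b (q / D) * cubic a b (r / D) := by
    rw [← quadTwist_scaled_equation hD hQ, ← quadTwist_scaled_equation hD hR]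
    ring
  rw [twistHeight_some, twistHeight_some, twistHeight_some, mul_assoc]
  refine (hle (natCast_sub_natCast_ne_zero hij) hv helim).trans
    (mul_le_mul_of_nonneg_left ?_ hc)
  linarith [logHeight₁_natCast_sub_natCast_le i j, logHeight₁_natCast_sub_natCast_le j k,
    logHeight₁_natCast_sub_natCast_le k i, zero_le_logHeight₁ (q / D : ℚ),
    zero_le_logHeight₁ (r / D : ℚ)]

variable {x y : Fin N → ℚ}

theorem elimProd_eq_zero_of_isNontrivAP (hD : D ≠ 0)
    (h : ∀ i, (quadTwist a b D).toAffine.Nonsingular (x i) (y i))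
    (hAP : IsNontrivAP x ∨ IsNontrivAP y) (i j k : Fin N) :
    elimProd a b (((i : ℕ) : ℚ) - (j : ℕ)) (((j : ℕ) : ℚ) - (k : ℕ)) (((k : ℕ) : ℚ) - (i : ℕ))
      (x i / D) (x j / D) (D * (y i / D ^ 2) * (y j / D ^ 2)) (x k / D) = 0 := by
  rcases hAP with hAP | hAP
  · exact elimProd_eq_zero_of_X_relation _ (by
      linear_combination (D : ℚ)⁻¹ * hAP.linear_relation i j k)
  · exact elimProd_eq_zero_of_Y_relation (quadTwist_scaled_equation hD (h k))
      (quadTwist_scaled_equation hD (h i)) (quadTwist_scaled_equation hD (h j)) (by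
        linear_combination ((D : ℚ) ^ 2)⁻¹ * hAP.linear_relation i j k)

theorem elimProd_eq_zero_of_isNontrivAP_of_add (hD : D ≠ 0)
    (h : ∀ i, (quadTwist a b D).toAffine.Nonsingular (x i) (y i))
    (hAP : IsNontrivAP x ∨ IsNontrivAP y) {i j k : Fin N} {q s r w : ℚ}
    (hQ : (quadTwist a b D).toAffine.Nonsingular q s)
    (hR : (quadTwist a b D).toAffine.Nonsingular r w) (hq : x i ≠ q) (hr : x i ≠ r)
    (hj : (Point.some _ _ (h i) + Point.some q s hQ : TwistPoint a b D) = Point.some _ _ (h j))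
    (hk : (Point.some _ _ (h i) + Point.some r w hR : TwistPoint a b D) = Point.some _ _ (h k)) :
    elimProd a b (((j : ℕ) : ℚ) - (k : ℕ)) (((k : ℕ) : ℚ) - (i : ℕ)) (((i : ℕ) : ℚ) - (j : ℕ))
      (q / D) (r / D) (D * (s / D ^ 2) * (w / D ^ 2)) (x i / D) = 0 := by
  obtain ⟨hxj, hyj⟩ := twistPoint_scaled_add hD (h i) hQ (h j) hq hj
  obtain ⟨hxk, hyk⟩ := twistPoint_scaled_add hD (h i) hR (h k) hr hk
  have hi := quadTwist_scaled_equation hD (h i)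
  have hQ' := quadTwist_scaled_equation hD hQ
  have hR' := quadTwist_scaled_equation hD hR
  rcases hAP with hAP | hAP
  · exact elimProd_eq_zero_of_add_X_relation hi hQ' hR' hxj hxk (by
      linear_combination (D : ℚ)⁻¹ * hAP.linear_relation j k i)
  · exact elimProd_eq_zero_of_add_Y_relation hi hQ' hR' hyj hyk (by
      linear_combination ((D : ℚ) ^ 2)⁻¹ * hAP.linear_relation j k i)

theorem twistPoint_some_injective_of_isNontrivAP
    (h : ∀ i, (quadTwist a b D).toAffine.Nonsingular (x i) (y i))
    (hAP : IsNontrivAP x ∨ IsNontrivAP y) :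
    Function.Injective fun i => (Point.some (x i) (y i) (h i) : TwistPoint a b D) := by
  intro i j hij
  obtain ⟨hx, hy⟩ := (Point.some.injEq _ _ _ _ _ _).mp hij
  exact hAP.elim (fun hAP => hAP.injective hx) fun hAP => hAP.injective hy

theorem exists_eq_some_of_ne_zero {P : TwistPoint a b D} (hP : P ≠ 0) :
    ∃ x y h, P = Point.some x y h := by
  rcases P with _ | ⟨x, y, h⟩
  · exact absurd rfl hP
  · exact ⟨x, y, h, rfl⟩

theorem exists_isHeightSpread_of_isNontrivAP (a b : ℚ) : ∃ c₀ : ℝ, ∀ c ≥ c₀, ∀ {D : ℤ}, D ≠ 0 →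
    ∀ {N : ℕ} {x y : Fin N → ℚ} (h : ∀ i, (quadTwist a b D).toAffine.Nonsingular (x i) (y i)),
      (IsNontrivAP x ∨ IsNontrivAP y) → IsHeightSpread twistHeight
        (fun i => (Point.some (x i) (y i) (h i) : TwistPoint a b D)) c := by
  obtain ⟨c₀, hc₀, hle⟩ := exists_twistHeight_le_of_elimProd_eq_zero a b
  refine ⟨c₀ + 1, fun c hc {D} hD {N x y} h hAP => ?_⟩
  have weaken {P Q R : TwistPoint a b D} {e : ℝ} (hec : e ≤ c)
      (hP : twistHeight P ≤ e * (twistHeight Q + twistHeight R + (Real.log N + 1))) :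
      twistHeight P ≤
        c * (twistHeight Q + twistHeight R + (Real.log (Fintype.card (Fin N)) + 1)) := by
    have hQ := twistHeight_nonneg Q
    have hR := twistHeight_nonneg R
    have : 0 ≤ Real.log N := Real.log_natCast_nonneg N
    rw [Fintype.card_fin]
    exact hP.trans (by gcongr)
  refine ⟨fun i j k hij _ _ => weaken (by linarith) (hle hD (h k) (h i) (h j) hij
    (elimProd_eq_zero_of_isNontrivAP hD h hAP i j k)), fun i j k hij hjk hik => ?_⟩
  have hinj := twistPoint_some_injective_of_isNontrivAP h hAP
  obtain ⟨q, s, hQ, hjQ⟩ := exists_eq_some_of_ne_zero (sub_ne_zero.mpr (hinj.ne hij.symm))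
  obtain ⟨r, w, hR, hkR⟩ := exists_eq_some_of_ne_zero (sub_ne_zero.mpr (hinj.ne hik.symm))
  simp only [hjQ, hkR]
  have of_X_eq {q s : ℚ} (hQ : (quadTwist a b D).toAffine.Nonsingular q s) (hq : x i = q) :
      twistHeight (Point.some _ _ (h i)) = twistHeight (Point.some q s hQ) := by
    rw [twistHeight_some, twistHeight_some, hq]
  have hlog := Real.log_natCast_nonneg N
  have hQ0 := twistHeight_nonneg (Point.some q s hQ)
  have hR0 := twistHeight_nonneg (Point.some r w hR)
  by_cases hq : x i = q
  · exact weaken (e := 1) (by linarith) (by linarith [of_X_eq hQ hq])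
  by_cases hr : x i = r
  · exact weaken (e := 1) (by linarith) (by linarith [of_X_eq hR hr])
  exact weaken (by linarith) (hle hD (h i) hQ hR hjk
    (elimProd_eq_zero_of_isNontrivAP_of_add hD h hAP hQ hR hq hr (by rw [← hjQ, add_sub_cancel])
      (by rw [← hkR, add_sub_cancel])))

end Progressions

/-! ### Square classes with even valuation outside finitely many primes -/

section SquareClasses

open IsDedekindDomain WithZero nonZeroDivisors

variable {K : Type*} [Field K]

/-- The set `S` meets at most `M` square classes of the field `K`. For nonzero elements,
`IsSquare (u * v)` says that `u` and `v` agree in `Kˣ` modulo squares. -/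
abbrev CoveredBySquareClasses (S : Set K) (M : ℕ) : Prop :=
  CoveredByClasses (fun u v : K => IsSquare (u * v)) S M

theorem CoveredBySquareClasses.of_mul_mem {S S' : Set K} {M : ℕ}
    (hS' : CoveredBySquareClasses S' M) (hS : ∀ u ∈ S, u ≠ 0) {T : Type*} [Finite T] (τ : K → T)
    (hτ : ∀ u ∈ S, ∀ v ∈ S, τ u = τ v → u * v ∈ S') :
    CoveredBySquareClasses S (Nat.card T * M) := by
  obtain ⟨κ, hκ⟩ := hS'
  let rep : K → K := fun u => Function.invFunOn τ S (τ u)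
  have rep_mem : ∀ u ∈ S, rep u ∈ S := fun u hu => Function.invFunOn_apply_mem hu
  have τ_rep : ∀ u ∈ S, τ (rep u) = τ u := fun u hu => Function.invFunOn_apply_eq hu
  rw [← Nat.card_fin M, ← Nat.card_prod]
  refine coveredByClasses_of_finite (fun u => (τ u, κ (u * rep u))) fun u hu v hv huv => ?_
  obtain ⟨hτuv, hκuv⟩ := Prod.mk.inj huv
  have hrep : rep v = rep u := congrArg (Function.invFunOn τ S) hτuv.symm
  rw [hrep] at hκuv
  obtain ⟨w, hw⟩ := hκ _ (hτ u hu _ (rep_mem u hu) (τ_rep u hu).symm)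
    _ (hτ v hv _ (rep_mem u hu) (hτuv.symm.trans (τ_rep u hu).symm)) hκuv
  have hne : rep u ≠ 0 := hS _ (rep_mem u hu)
  refine ⟨w / rep u, ?_⟩
  field_simp
  linear_combination hw

theorem finite_quotient_range_powMonoidHom {G : Type*} [CommGroup G] [Group.FG G] {n : ℕ}
    (hn : n ≠ 0) : Finite (G ⧸ (powMonoidHom n : G →* G).range) := by
  refine CommGroup.finite_of_fg_isMulTorsion _ fun x => isOfFinOrder_iff_pow_eq_one.mpr
    ⟨n, Nat.pos_of_ne_zero hn, ?_⟩
  induction x using QuotientGroup.induction_on with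
  | H z => exact (QuotientGroup.eq_one_iff _).mpr ⟨z, rfl⟩

theorem exists_coveredBySquareClasses_unit_mul_sq (R : Type*) [CommRing R] [Algebra R K]
    [Group.FG Rˣ] :
    ∃ m, CoveredBySquareClasses {u : K | ∃ (ε : Rˣ) (t : K), u = algebraMap R K ε * t ^ 2} m := by
  have := finite_quotient_range_powMonoidHom (G := Rˣ) two_ne_zero
  choose! ε t hεt using fun (u : K)
    (hu : u ∈ {u : K | ∃ (ε : Rˣ) (t : K), u = algebraMap R K ε * t ^ 2}) => hu
  refine ⟨_, coveredByClasses_of_finite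
    (fun u => (ε u : Rˣ ⧸ (powMonoidHom 2 : Rˣ →* Rˣ).range)) fun u hu v hv huv => ?_⟩
  obtain ⟨w, hw⟩ := QuotientGroup.eq.mp huv
  have hεv : algebraMap R K (ε v) = algebraMap R K (ε u) * algebraMap R K w ^ 2 := by
    rw [← map_pow, ← map_mul, ← Units.val_pow_eq_pow_val, ← Units.val_mul]
    rw [powMonoidHom_apply] at hw
    rw [hw, mul_inv_cancel_left]
  have hv' := hεt v hv
  rw [hεv] at hv'
  refine ⟨algebraMap R K (ε u) * algebraMap R K w * t u * t v, ?_⟩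
  linear_combination v * hεt u hu + algebraMap R K (ε u) * t u ^ 2 * hv'

theorem isSquare_exp_iff {z : ℤ} : IsSquare (exp z : ℤᵐ⁰) ↔ Even z := by
  refine ⟨fun ⟨r, hr⟩ => ⟨log r, ?_⟩, fun ⟨r, hr⟩ => ⟨exp r, by rw [hr, exp_add]⟩⟩
  have hr0 : r ≠ 0 := by
    rintro rfl
    simp at hr
  rwa [← exp_log hr0, ← exp_add, exp_inj] at hr

theorem isSquare_mul_of_isSquare_iff {x y : ℤᵐ⁰} (hx : x ≠ 0) (hy : y ≠ 0)
    (h : IsSquare x ↔ IsSquare y) : IsSquare (x * y) := by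
  rw [← exp_log hx, ← exp_log hy, isSquare_exp_iff, isSquare_exp_iff] at h
  rwa [← exp_log hx, ← exp_log hy, ← exp_add, isSquare_exp_iff, Int.even_add]

variable {R : Type*} [CommRing R] [IsDedekindDomain R] [Algebra R K] [IsFractionRing R K]

variable (K) in
/-- The nonzero elements of the fraction field `K` with even valuation at every prime outside `S`.
Modulo squares this is the `2`-Selmer group of `K` relative to `S`. -/
def evenOutside (S : Set (HeightOneSpectrum R)) : Set K :=
  {u | u ≠ 0 ∧ ∀ v ∉ S, IsSquare (v.valuation K u)}

theorem exists_sq_eq_of_even_count {I : Ideal R} (hI : I ≠ 0)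
    (h : ∀ v : HeightOneSpectrum R,
      Even ((Associates.mk v.asIdeal).count (Associates.mk I).factors)) :
    ∃ J : Ideal R, J ^ 2 = I := by
  classical
  choose n hn using h
  have hfactor : ∀ v : HeightOneSpectrum R,
      v.maxPowDividing I = (v.asIdeal ^ n v) ^ 2 := fun v => by
    rw [HeightOneSpectrum.maxPowDividing, hn, ← two_mul, pow_mul']
  have hfin : Function.HasFiniteMulSupport fun v : HeightOneSpectrum R => v.asIdeal ^ n v := by
    refine (Ideal.hasFiniteMulSupport hI).subset fun v hv hv1 => hv ?_
    have hsq : (v.asIdeal ^ n v) ^ 2 = 1 := (hfactor v).symm.trans hv1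
    rw [Ideal.one_eq_top, ← Ideal.isUnit_iff, isUnit_pow_iff two_ne_zero, Ideal.isUnit_iff,
      ← Ideal.one_eq_top] at hsq
    exact hsq
  refine ⟨∏ᶠ v : HeightOneSpectrum R, v.asIdeal ^ n v, ?_⟩
  rw [finprod_pow hfin, ← Ideal.finprod_heightOneSpectrum_factorization hI]
  exact finprod_congr fun v => (hfactor v).symm

theorem exists_ideal_sq_eq_span_of_isSquare_valuation {α : R} (hα : α ≠ 0)
    (h : ∀ v : HeightOneSpectrum R, IsSquare (v.valuation K (algebraMap R K α))) :
    ∃ I : Ideal R, I ^ 2 = Ideal.span {α} := by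
  classical
  refine exists_sq_eq_of_even_count (by simpa using hα) fun v => ?_
  have hv := h v
  rw [HeightOneSpectrum.valuation_of_algebraMap, v.intValuation_if_neg hα, isSquare_exp_iff,
    even_neg, Int.even_coe_nat] at hv
  exact hv

theorem exists_ideal_sq_eq_span_of_mem_evenOutside_empty {u : K}
    (hu : u ∈ evenOutside K (∅ : Set (HeightOneSpectrum R))) :
    ∃ (I : (Ideal R)⁰) (α d : R), d ≠ 0 ∧ algebraMap R K α = u * algebraMap R K d ^ 2 ∧
      (I : Ideal R) ^ 2 = Ideal.span {α} := by
  obtain ⟨x, d, hd, hx⟩ := IsFractionRing.div_surjective (A := R) u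
  have hd0 : d ≠ 0 := nonZeroDivisors.ne_zero hd
  have hdK : algebraMap R K d ≠ 0 := by simpa using hd0
  have hα : algebraMap R K (x * d) = u * algebraMap R K d ^ 2 := by
    rw [← hx, map_mul]
    field_simp
  have hα0 : x * d ≠ 0 := by
    intro h0
    rw [h0, map_zero] at hα
    exact mul_ne_zero hu.1 (pow_ne_zero 2 hdK) hα.symm
  obtain ⟨I, hI⟩ := exists_ideal_sq_eq_span_of_isSquare_valuation (K := K) hα0 fun v => by
    rw [hα, map_mul, map_pow]
    exact (hu.2 v (Set.notMem_empty v)).mul (IsSquare.sq _)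
  have hI0 : I ≠ 0 := by
    rintro rfl
    rw [zero_pow two_ne_zero, eq_comm, Ideal.zero_eq_bot, Ideal.span_singleton_eq_bot] at hI
    exact hα0 hI
  exact ⟨⟨I, mem_nonZeroDivisors_of_ne_zero hI0⟩, x * d, d, hd0, hα, hI⟩

theorem exists_unit_mul_sq_of_mk0_eq {u v : K} {I J : (Ideal R)⁰} {α β d e : R} (he : e ≠ 0)
    (hα : algebraMap R K α = u * algebraMap R K d ^ 2) (hI : (I : Ideal R) ^ 2 = Ideal.span {α})
    (hβ : algebraMap R K β = v * algebraMap R K e ^ 2) (hJ : (J : Ideal R) ^ 2 = Ideal.span {β})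
    (hIJ : ClassGroup.mk0 I = ClassGroup.mk0 J) :
    ∃ (ε : Rˣ) (t : K), u * v = algebraMap R K ε * t ^ 2 := by
  obtain ⟨x, y, _, hy, hxy⟩ := ClassGroup.mk0_eq_mk0_iff.mp hIJ
  have hspan : Ideal.span {x ^ 2 * α} = Ideal.span {y ^ 2 * β} := by
    simp only [← Ideal.span_singleton_mul_span_singleton, ← hI, ← hJ,
      ← Ideal.span_singleton_pow, ← mul_pow, hxy]
  obtain ⟨ε, hε⟩ := Ideal.span_singleton_eq_span_singleton.mp hspan
  have hεK := congrArg (algebraMap R K) hε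
  simp only [map_mul, map_pow, hα, hβ] at hεK
  have hyK : algebraMap R K y ≠ 0 := by simpa using hy
  have heK : algebraMap R K e ≠ 0 := by simpa using he
  refine ⟨ε, algebraMap R K x * u * algebraMap R K d / (algebraMap R K y * algebraMap R K e), ?_⟩
  field_simp
  linear_combination (-u) * hεK

variable (K R) in
theorem exists_coveredBySquareClasses_evenOutside_empty [Group.FG Rˣ] [Finite (ClassGroup R)] :
    ∃ m, CoveredBySquareClasses (evenOutside K (∅ : Set (HeightOneSpectrum R))) m := by
  obtain ⟨m, hm⟩ := exists_coveredBySquareClasses_unit_mul_sq (K := K) R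
  choose! I α d hd hα hI using
    fun u hu => exists_ideal_sq_eq_span_of_mem_evenOutside_empty (R := R) (K := K) (u := u) hu
  refine ⟨_, hm.of_mul_mem (fun u hu => hu.1) (fun u => ClassGroup.mk0 (I u))
    fun u hu v hv huv => ?_⟩
  exact exists_unit_mul_sq_of_mk0_eq (hd v hv) (hα u hu) (hI u hu) (hα v hv) (hI v hv) huv

theorem CoveredBySquareClasses.evenOutside_of_finite {S : Set (HeightOneSpectrum R)}
    (hS : S.Finite) {m : ℕ}
    (hm : CoveredBySquareClasses (evenOutside K (∅ : Set (HeightOneSpectrum R))) m) :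
    CoveredBySquareClasses (evenOutside K S) (2 ^ S.ncard * m) := by
  classical
  have : Finite S := hS
  have hcard : Nat.card (S → Bool) = 2 ^ S.ncard := by
    rw [Nat.card_fun, Nat.card_coe_set_eq, Nat.card_eq_fintype_card, Fintype.card_bool]
  rw [← hcard]
  refine hm.of_mul_mem (fun u hu => hu.1)
    (fun u (v : S) => decide (IsSquare (v.1.valuation K u))) fun u hu v hv huv => ?_
  refine ⟨mul_ne_zero hu.1 hv.1, fun w _ => ?_⟩
  rw [map_mul]
  by_cases hw : w ∈ S
  · exact isSquare_mul_of_isSquare_iff (by simpa using hu.1) (by simpa using hv.1)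
      (decide_eq_decide.mp (congrFun huv ⟨w, hw⟩))
  · exact (hu.2 w hw).mul (hv.2 w hw)

end SquareClasses

section PrimesAbove

open NumberField IsDedekindDomain

theorem exists_mem_primeFactors_of_natCast_mem {R : Type*} [CommRing R] {I : Ideal R} [I.IsPrime]
    {n : ℕ} (hn : n ≠ 0) (h : (n : R) ∈ I) : ∃ p ∈ n.primeFactors, (p : R) ∈ I := by
  rw [← Nat.prod_factorization_pow_eq_self hn, Nat.prod_factorization_eq_prod_primeFactors,
    Nat.cast_prod, Ideal.IsPrime.prod_mem_iff] at h
  obtain ⟨p, hp, hpI⟩ := h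
  exact ⟨p, hp, Ideal.IsPrime.mem_of_pow_mem ‹_› _ (by simpa using hpI)⟩

theorem ncard_primesOver_le_finrank {A : Type*} [CommRing A] [IsDomain A] (p : Ideal A) [p.IsPrime]
    (B : Type*) [CommRing B] [Algebra A B] [Module.Finite A B] [Module.Flat A B] :
    (p.primesOver B).ncard ≤ Module.finrank A B := by
  have := (Algebra.QuasiFinite.finite_primesOver (S := B) p).fintype
  rw [← Ideal.sum_ramification_inertia_eq_finrank p B, ← Nat.card_coe_set_eq,
    Nat.card_eq_fintype_card, ← Finset.card_univ, Finset.card_eq_sum_ones]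
  refine Finset.sum_le_sum fun q _ => ?_
  have : q.1.IsPrime := q.2.1
  exact Nat.mul_pos (q.1.ramificationIdx_pos A) (q.1.inertiaDeg_pos A)

variable (K : Type*) [Field K] [NumberField K]

theorem finite_heightOneSpectrum_intCast_mem {D : ℤ} (hD : D ≠ 0) :
    {v : HeightOneSpectrum (𝓞 K) | (D : 𝓞 K) ∈ v.asIdeal}.Finite := by
  have hI : Ideal.span {(D : 𝓞 K)} ≠ 0 := by simpa using hD
  exact (Ideal.finite_factors hI).subset fun v hv =>
    Ideal.dvd_span_singleton.mpr hv

theorem ncard_heightOneSpectrum_prime_mem_le {p : ℕ} (hp : p.Prime) :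
    {v : HeightOneSpectrum (𝓞 K) | (p : 𝓞 K) ∈ v.asIdeal}.ncard ≤ Module.finrank ℤ (𝓞 K) := by
  have hPprime : (Ideal.span {(p : ℤ)}).IsPrime :=
    (Ideal.span_singleton_prime (by exact_mod_cast hp.ne_zero)).mpr (Nat.prime_iff_prime_int.mp hp)
  have hPmax : (Ideal.span {(p : ℤ)}).IsMaximal := hPprime.isMaximal (by simpa using hp.ne_zero)
  have hmaps : ∀ v ∈ {v : HeightOneSpectrum (𝓞 K) | (p : 𝓞 K) ∈ v.asIdeal},
      v.asIdeal ∈ (Ideal.span {(p : ℤ)}).primesOver (𝓞 K) := by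
    intro v hv
    refine ⟨v.isPrime, ⟨hPmax.eq_of_le (Ideal.IsPrime.under ℤ v.asIdeal).ne_top ?_⟩⟩
    rw [Ideal.span_singleton_le_iff_mem, Ideal.mem_comap]
    simpa using hv
  exact (Set.ncard_le_ncard_of_injOn _ hmaps (fun v _ w _ h => HeightOneSpectrum.ext h)
    (Algebra.QuasiFinite.finite_primesOver _)).trans (ncard_primesOver_le_finrank _ _)

theorem ncard_heightOneSpectrum_intCast_mem_le {D : ℤ} (hD : D ≠ 0) :
    {v : HeightOneSpectrum (𝓞 K) | (D : 𝓞 K) ∈ v.asIdeal}.ncard ≤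
      D.natAbs.primeFactors.card * Module.finrank ℤ (𝓞 K) := by
  have hsub : {v : HeightOneSpectrum (𝓞 K) | (D : 𝓞 K) ∈ v.asIdeal} ⊆
      ⋃ p ∈ D.natAbs.primeFactors, {v : HeightOneSpectrum (𝓞 K) | (p : 𝓞 K) ∈ v.asIdeal} := by
    intro v hv
    have hmem : ((D.natAbs : ℕ) : 𝓞 K) ∈ v.asIdeal := by
      rcases Int.natAbs_eq D with h | h
      · rwa [Set.mem_ofPred_eq, h, Int.cast_natCast] at hv
      · rwa [Set.mem_ofPred_eq, h, Int.cast_neg, Int.cast_natCast, neg_mem_iff] at hv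
    have := v.isPrime
    obtain ⟨p, hp, hpv⟩ :=
      exists_mem_primeFactors_of_natCast_mem (Int.natAbs_ne_zero.mpr hD) hmem
    exact Set.mem_biUnion hp hpv
  have hfin : (⋃ p ∈ D.natAbs.primeFactors,
      {v : HeightOneSpectrum (𝓞 K) | (p : 𝓞 K) ∈ v.asIdeal}).Finite :=
    Set.Finite.biUnion (Finset.finite_toSet _) fun p hp => by
      simpa using finite_heightOneSpectrum_intCast_mem K
        (D := p) (by exact_mod_cast (Nat.prime_of_mem_primeFactors hp).ne_zero)
  calc _ ≤ _ := Set.ncard_le_ncard hsub hfin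
    _ ≤ ∑ p ∈ D.natAbs.primeFactors,
        {v : HeightOneSpectrum (𝓞 K) | (p : 𝓞 K) ∈ v.asIdeal}.ncard :=
      Finset.set_ncard_biUnion_le _ _
    _ ≤ _ := Finset.sum_le_card_nsmul _ _ _ fun p hp =>
      ncard_heightOneSpectrum_prime_mem_le K (Nat.prime_of_mem_primeFactors hp)

theorem exists_coveredBySquareClasses_evenOutside_union {S : Set (HeightOneSpectrum (𝓞 K))}
    (hS : S.Finite) :
    ∃ C : ℕ, ∀ D : ℤ, D ≠ 0 → CoveredBySquareClasses
      (evenOutside K (S ∪ {v | (D : 𝓞 K) ∈ v.asIdeal})) (C ^ (D.natAbs.primeFactors.card + 1)) := by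
  have : Group.FG (𝓞 K)ˣ := Group.fg_iff_monoid_fg.mpr inferInstance
  obtain ⟨m, hm⟩ := exists_coveredBySquareClasses_evenOutside_empty K (𝓞 K)
  have : 1 ≤ m := hm.pos
  set n := Module.finrank ℤ (𝓞 K)
  refine ⟨2 ^ (S.ncard + n) * m, fun D hD => ?_⟩
  have hfin := finite_heightOneSpectrum_intCast_mem K hD
  refine (hm.evenOutside_of_finite (hS.union hfin)).mono ?_
  have hcard : (S ∪ {v | (D : 𝓞 K) ∈ v.asIdeal}).ncard ≤
      S.ncard + D.natAbs.primeFactors.card * n :=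
    (Set.ncard_union_le _ _).trans
      (Nat.add_le_add_left (ncard_heightOneSpectrum_intCast_mem_le K hD) _)
  rw [mul_pow, ← pow_mul]
  gcongr
  · norm_num
  · nlinarith [Nat.zero_le (S.ncard * D.natAbs.primeFactors.card)]
  · exact Nat.le_self_pow (Nat.succ_ne_zero _) m

end PrimesAbove

/-! ### Complete 2-descent -/

section EvenValuation

open IsDedekindDomain WithZero

theorem isSquare_valuation_of_sq_eq_mul_quadratic {K Γ₀ : Type*} [Field K]
    [LinearOrderedCommGroupWithZero Γ₀] (v : Valuation K Γ₀) {d e y t δ : K} (hd : v d = 1)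
    (ht : v t ≤ 1) (hδ : v δ = 1) (he : e ≠ 0) (h : d * y ^ 2 = e * (e ^ 2 + t * e + δ)) :
    IsSquare (v e) := by
  have hv := congrArg v h
  rw [map_mul, map_mul, map_pow, hd, one_mul] at hv
  have he0 : v e ≠ 0 := by simpa using he
  rcases lt_trichotomy (v e) 1 with hlt | heq | hgt
  · have hquad : v (e ^ 2 + t * e + δ) = 1 := by
      rw [← hδ]
      refine v.map_add_eq_of_lt_right ?_
      calc v (e ^ 2 + t * e) = v e * v (e + t) := by rw [← map_mul]; ring_nf
        _ ≤ v e * 1 := by gcongr; exact (v.map_add e t).trans (max_le hlt.le ht)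
        _ < v δ := by rwa [mul_one, hδ]
    rw [hquad, mul_one] at hv
    exact hv ▸ IsSquare.sq _
  · exact heq ▸ IsSquare.one
  · have hlin : v (t * e + δ) ≤ v e := by
      refine (v.map_add _ _).trans (max_le ?_ (hδ ▸ hgt.le))
      rw [map_mul]
      exact mul_le_of_le_one_left' ht
    have hquad : v (e ^ 2 + t * e + δ) = v e ^ 2 := by
      rw [add_assoc, ← map_pow]
      refine v.map_add_eq_of_lt_left (hlin.trans_lt ?_)
      rw [map_pow]
      exact lt_self_pow₀ hgt one_lt_two
    refine ⟨v y / v e, ?_⟩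
    field_simp
    rw [hv, hquad, ← pow_succ']

theorem cubic_eq_of_root {R : Type*} [CommRing R] {a b θ : R} (hθ : cubic a b θ = 0) (x : R) :
    cubic a b x = (x - θ) * ((x - θ) ^ 2 + 3 * θ * (x - θ) + (3 * θ ^ 2 + a)) := by
  unfold cubic at *
  linear_combination hθ

theorem three_mul_sq_add_ne_zero_of_root {R : Type*} [CommRing R] {a b θ : R}
    (hab : 4 * a ^ 3 + 27 * b ^ 2 ≠ 0) (hθ : cubic a b θ = 0) : 3 * θ ^ 2 + a ≠ 0 := by
  intro h
  have ha : a = -3 * θ ^ 2 := by linear_combination h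
  have hb : b = 2 * θ ^ 3 := by
    unfold cubic at hθ
    linear_combination hθ - θ * ha
  apply hab
  rw [ha, hb]
  ring

variable {R K : Type*} [CommRing R] [IsDedekindDomain R] [Field K] [Algebra R K]
  [IsFractionRing R K]

theorem finite_setOf_valuation_ne_one {x : K} (hx : x ≠ 0) :
    {v : HeightOneSpectrum R | v.valuation K x ≠ 1}.Finite := by
  refine ((HeightOneSpectrum.Support.finite R x).union
    (HeightOneSpectrum.Support.finite R x⁻¹)).subset fun v hv => ?_
  rcases lt_or_gt_of_ne hv with hlt | hgt
  · right
    change 1 < v.valuation K x⁻¹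
    rw [map_inv₀]
    exact (one_lt_inv₀ (zero_lt_iff.mpr (by simpa using hx))).mpr hlt
  · exact Or.inl hgt

variable (R) in
/-- The primes at which the factorization `(x - θ) ((x - θ)² + 3θ (x - θ) + (3θ² + a))` of
`x³ + ax + b` at a root `θ` has a non-integral coefficient or a non-unit constant term. -/
def badPrimes (a θ : K) : Set (HeightOneSpectrum R) :=
  HeightOneSpectrum.Support R (3 * θ) ∪ {v | v.valuation K (3 * θ ^ 2 + a) ≠ 1}

theorem finite_badPrimes {a b θ : K} (hab : 4 * a ^ 3 + 27 * b ^ 2 ≠ 0) (hθ : cubic a b θ = 0) :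
    (badPrimes R a θ).Finite :=
  (HeightOneSpectrum.Support.finite R _).union
    (finite_setOf_valuation_ne_one (three_mul_sq_add_ne_zero_of_root hab hθ))

theorem mul_sub_root_mem_evenOutside {a b θ : K} (hθ : cubic a b θ = 0) {D : ℤ}
    (hD : (D : K) ≠ 0) {x y : K} (hy : y ≠ 0) (hxy : D * y ^ 2 = cubic a b x) :
    D * (x - θ) ∈ evenOutside K (badPrimes R a θ ∪ {v | (D : R) ∈ v.asIdeal}) := by
  rw [cubic_eq_of_root hθ] at hxy
  have hne : x - θ ≠ 0 := by
    intro h0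
    rw [h0, zero_mul] at hxy
    exact mul_ne_zero hD (pow_ne_zero 2 hy) hxy
  refine ⟨mul_ne_zero hD hne, fun v hv => ?_⟩
  simp only [badPrimes, Set.mem_union, not_or, Set.mem_ofPred_eq, not_not] at hv
  obtain ⟨⟨hint, hunit⟩, hDv⟩ := hv
  have hvD : v.valuation K (D : K) = 1 := by
    simpa using (HeightOneSpectrum.valuation_eq_one_iff_notMem (K := K) v).mpr hDv
  rw [map_mul, hvD, one_mul]
  exact isSquare_valuation_of_sq_eq_mul_quadratic _ hvD (not_lt.mp hint) hunit hne hxy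

end EvenValuation

section SquaresModuloCubic

open Polynomial NumberField

/-- The `x`-coordinates of the rational points of `D y² = x³ + ax + b` with `y ≠ 0`. -/
def twistXCoords (a b : ℚ) (D : ℤ) : Set ℚ :=
  {x | ∃ y ≠ 0, (D : ℚ) * y ^ 2 = cubic a b x}

theorem exists_coveredByClasses_sub_root (K : Type*) [Field K] [NumberField K] {a b : ℚ}
    (hab : 4 * a ^ 3 + 27 * b ^ 2 ≠ 0) {θ : K} (hθ : cubic (a : K) b θ = 0) :
    ∃ C : ℕ, ∀ D : ℤ, D ≠ 0 → CoveredByClasses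
      (fun x₁ x₂ : ℚ => IsSquare (((x₁ : K) - θ) * ((x₂ : K) - θ))) (twistXCoords a b D)
      (C ^ (D.natAbs.primeFactors.card + 1)) := by
  have hfin : (badPrimes (𝓞 K) (a : K) θ).Finite := finite_badPrimes (by exact_mod_cast hab) hθ
  obtain ⟨C, hC⟩ := exists_coveredBySquareClasses_evenOutside_union K hfin
  refine ⟨C, fun D hD => ?_⟩
  have hDK : (D : K) ≠ 0 := by exact_mod_cast hD
  refine (hC D hD).of_mapsTo (fun x : ℚ => (D : K) * (x - θ)) ?_ ?_
  · rintro x ⟨y, hy, hxy⟩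
    refine mul_sub_root_mem_evenOutside hθ hDK (y := (y : K)) (by exact_mod_cast hy) ?_
    unfold cubic at *
    exact_mod_cast hxy
  · rintro x₁ - x₂ - ⟨w, hw⟩
    refine ⟨w / D, ?_⟩
    field_simp
    linear_combination hw

/-- The polynomial `X³ + aX + b`. -/
noncomputable abbrev cubicPoly {R : Type*} [CommRing R] (a b : R) : R[X] :=
  cubic (C a) (C b) X

theorem exists_coveredByClasses_irreducible_dvd_sub_sq {a b : ℚ}
    (hab : 4 * a ^ 3 + 27 * b ^ 2 ≠ 0) {q : ℚ[X]} (hq : Irreducible q) (hqf : q ∣ cubicPoly a b) :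
    ∃ M : ℕ, ∀ D : ℤ, D ≠ 0 → CoveredByClasses
      (fun x₁ x₂ : ℚ => ∃ z, q ∣ (C x₁ - X) * (C x₂ - X) - z ^ 2) (twistXCoords a b D)
      (M ^ (D.natAbs.primeFactors.card + 1)) := by
  have : Fact (Irreducible q) := ⟨hq⟩
  have mk_C (r : ℚ) : AdjoinRoot.mk q (C r) = (r : AdjoinRoot q) := by
    rw [AdjoinRoot.mk_C]
    exact eq_ratCast _ _
  have hθ : cubic (a : AdjoinRoot q) b (AdjoinRoot.root q) = 0 := by
    have hmk := AdjoinRoot.mk_eq_zero.mpr hqf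
    rwa [cubicPoly, cubic, map_add, map_add, map_mul, map_pow, mk_C, mk_C, AdjoinRoot.mk_X] at hmk
  obtain ⟨M, hM⟩ := exists_coveredByClasses_sub_root (AdjoinRoot q) hab hθ
  refine ⟨M, fun D hD => (hM D hD).of_mapsTo id (Set.mapsTo_id _) ?_⟩
  rintro x₁ - x₂ - ⟨s, hs⟩
  obtain ⟨z, rfl⟩ := AdjoinRoot.mk_surjective s
  refine ⟨z, AdjoinRoot.mk_eq_mk.mp ?_⟩
  rw [map_mul, map_sub, map_sub, mk_C, mk_C, AdjoinRoot.mk_X, map_pow, sq]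
  exact hs

theorem exists_mul_dvd_sub_sq {R : Type*} [CommRing R] {p q g : R} (hpq : IsCoprime p q)
    (hp : ∃ z, p ∣ g - z ^ 2) (hq : ∃ z, q ∣ g - z ^ 2) : ∃ z, p * q ∣ g - z ^ 2 := by
  obtain ⟨y, c, hc⟩ := hp
  obtain ⟨z, d, hd⟩ := hq
  obtain ⟨u, v, huv⟩ := id hpq
  set w := z * (u * p) + y * (v * q)
  refine ⟨w, hpq.mul_dvd ⟨c - (z * u - y * u) * (w + y), ?_⟩ ⟨d - (y * v - z * v) * (w + z), ?_⟩⟩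
  · linear_combination hc - y * (w + y) * huv
  · linear_combination hd - z * (w + z) * huv

theorem exists_coveredByClasses_dvd_sub_sq {a b : ℚ} (hab : 4 * a ^ 3 + 27 * b ^ 2 ≠ 0)
    {f : ℚ[X]} (hf : Squarefree f) (hfd : f ∣ cubicPoly a b) :
    ∃ M : ℕ, ∀ D : ℤ, D ≠ 0 → CoveredByClasses
      (fun x₁ x₂ : ℚ => ∃ z, f ∣ (C x₁ - X) * (C x₂ - X) - z ^ 2) (twistXCoords a b D)
      (M ^ (D.natAbs.primeFactors.card + 1)) := by
  induction f using UniqueFactorizationMonoid.induction_on_prime with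
  | h₁ => exact absurd hf not_squarefree_zero
  | h₂ f hunit =>
    refine ⟨1, fun D _ => ⟨fun _ => ⟨0, by simp⟩, fun _ _ _ _ _ => ⟨0, hunit.dvd⟩⟩⟩
  | h₃ f q _ hq ih =>
    have hqf : IsCoprime q f := by
      rw [hq.irreducible.coprime_iff_not_dvd]
      exact fun hdvd => hq.not_isUnit (hf q (mul_dvd_mul_left q hdvd))
    obtain ⟨M, hM⟩ := ih hf.of_mul_right (dvd_of_mul_left_dvd hfd)
    obtain ⟨M', hM'⟩ := exists_coveredByClasses_irreducible_dvd_sub_sq hab hq.irreducible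
      (dvd_of_mul_right_dvd hfd)
    refine ⟨M' * M, fun D hD => ?_⟩
    rw [mul_pow]
    exact ((hM' D hD).and (hM D hD)).of_mapsTo id (Set.mapsTo_id _)
      fun _ _ _ _ h => exists_mul_dvd_sub_sq hqf h.1 h.2

theorem squarefree_cubicPoly {F : Type*} [Field F] {a b : F} (hab : 4 * a ^ 3 + 27 * b ^ 2 ≠ 0) :
    Squarefree (cubicPoly a b) := by
  set d := 4 * a ^ 3 + 27 * b ^ 2 with hd
  have hderiv : derivative (cubicPoly a b) = 3 * X ^ 2 + C a := by
    simp only [cubicPoly, cubic, derivative_add, derivative_X_pow, derivative_mul, derivative_C,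
      derivative_X]
    norm_num [map_ofNat]
  have hone : (1 : F[X]) = C d⁻¹ * C d := by rw [← C_mul, inv_mul_cancel₀ hab, C_1]
  -- The Bézout identity behind the discriminant formula.
  refine Separable.squarefree ⟨C d⁻¹ * (C (-18 * a) * X + C (27 * b)),
    C d⁻¹ * (C (6 * a) * X ^ 2 + C (-9 * b) * X + C (4 * a ^ 2)), ?_⟩
  rw [hderiv, hone, hd]
  simp only [cubicPoly, cubic, C_mul, C_add, C_pow, C_neg, map_ofNat]
  ring

end SquaresModuloCubic

section Halving

open Polynomial WeierstrassCurve WeierstrassCurve.Affine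

theorem natDegree_cubicPoly {R : Type*} [CommRing R] [Nontrivial R] (a b : R) :
    (cubicPoly a b).natDegree = 3 := by
  unfold cubicPoly cubic
  compute_degree!

theorem monic_cubicPoly {R : Type*} [CommRing R] (a b : R) :
    (cubicPoly a b).Monic := by
  unfold cubicPoly cubic
  monicity!

theorem eval_cubicPoly {R : Type*} [CommRing R] (a b x : R) :
    (cubicPoly a b).eval x = cubic a b x := by
  simp [cubicPoly, cubic]

theorem eq_zero_of_cubicPoly_dvd_quadratic {R : Type*} [CommRing R] [Nontrivial R]
    {a b p q r : R} (h : cubicPoly a b ∣ C p + C q * X + C r * X ^ 2) :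
    p = 0 ∧ q = 0 ∧ r = 0 := by
  have hzero : C p + C q * X + C r * X ^ 2 = 0 := by
    by_contra hne
    refine (monic_cubicPoly a b).not_dvd_of_natDegree_lt hne ?_ h
    rw [natDegree_cubicPoly]
    exact (by compute_degree : _ ≤ 2).trans_lt (by norm_num)
  have hcoeff (n : ℕ) : coeff (C p + C q * X + C r * X ^ 2) n = 0 := by rw [hzero, coeff_zero]
  exact ⟨by simpa [coeff_X, coeff_C] using hcoeff 0, by simpa [coeff_X, coeff_C] using hcoeff 1,
    by simpa [coeff_X, coeff_C] using hcoeff 2⟩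

theorem exists_quadratic_cubicPoly_dvd_sub {R : Type*} [CommRing R] [Nontrivial R] (a b : R)
    (z : R[X]) : ∃ p q r : R, cubicPoly a b ∣ z - (C p + C q * X + C r * X ^ 2) := by
  set w := z %ₘ cubicPoly a b
  have hdeg : w.natDegree < 3 := by
    rw [← natDegree_cubicPoly a b]
    refine natDegree_modByMonic_lt _ (monic_cubicPoly a b) fun h => ?_
    simpa [h] using natDegree_cubicPoly a b
  have hquadratic : w = C (w.coeff 0) + C (w.coeff 1) * X + C (w.coeff 2) * X ^ 2 := by
    conv_lhs => rw [w.as_sum_range' 3 hdeg]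
    simp only [Finset.sum_range_succ, Finset.sum_range_zero, ← C_mul_X_pow_eq_monomial, zero_add,
      pow_zero, mul_one, pow_one]
  refine ⟨w.coeff 0, w.coeff 1, w.coeff 2, z /ₘ cubicPoly a b, ?_⟩
  rw [← hquadratic]
  linear_combination -modByMonic_add_div z (cubicPoly a b)

theorem exists_sq_coeffs_of_cubicPoly_dvd {R : Type*} [CommRing R] [Nontrivial R] {a b d x₀ : R}
    {z : R[X]} (h : cubicPoly a b ∣ C d * (C x₀ - X) - z ^ 2) :
    ∃ p q r : R, q ^ 2 + 2 * p * r = a * r ^ 2 ∧ d + 2 * p * q = 2 * a * q * r + b * r ^ 2 ∧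
      d * x₀ = p ^ 2 - 2 * q * r * b := by
  obtain ⟨p, q, r, w, hw⟩ := exists_quadratic_cubicPoly_dvd_sub a b z
  obtain ⟨c, hc⟩ := h
  have hdvd : cubicPoly a b ∣ C (d * x₀ - p ^ 2 + 2 * q * r * b) +
      C (2 * a * q * r + b * r ^ 2 - d - 2 * p * q) * X +
      C (a * r ^ 2 - q ^ 2 - 2 * p * r) * X ^ 2 := by
    refine ⟨c + w * (z + (C p + C q * X + C r * X ^ 2)) + C (r ^ 2) * X + C (2 * q * r), ?_⟩
    simp only [cubicPoly, cubic, C_mul, C_add, C_sub, C_pow, map_ofNat] at hc hw ⊢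
    linear_combination hc + (z + (C p + C q * X + C r * X ^ 2)) * hw
  obtain ⟨h0, h1, h2⟩ := eq_zero_of_cubicPoly_dvd_quadratic hdvd
  exact ⟨p, q, r, by linear_combination -h2, by linear_combination -h1,
    by linear_combination h0⟩

-- The square root `p + qX + rX²` of `d (x₀ - X)` modulo the cubic comes from the tangent at
-- `(t, s) = (q/r, 1/r)`, which meets the curve again at `x₀`.
theorem exists_halving_of_cubicPoly_dvd {F : Type*} [Field F] {a b d x₀ : F} (hd : d ≠ 0)
    {z : F[X]} (h : cubicPoly a b ∣ C d * (C x₀ - X) - z ^ 2) :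
    ∃ t s : F, s ≠ 0 ∧ d * s ^ 2 = cubic a b t ∧
      4 * s ^ 2 * (d * x₀) = (3 * t ^ 2 + a) ^ 2 - 8 * d * t * s ^ 2 := by
  obtain ⟨p, q, r, h2, h1, h0⟩ := exists_sq_coeffs_of_cubicPoly_dvd h
  have hr : r ≠ 0 := by
    rintro rfl
    obtain rfl : q = 0 := by simpa using h2
    exact hd (by linear_combination h1)
  have ha : a = (q ^ 2 + 2 * p * r) / r ^ 2 := by
    field_simp
    linear_combination -h2
  have hd : d = 2 * a * q * r + b * r ^ 2 - 2 * p * q := by linear_combination h1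
  refine ⟨q / r, r⁻¹, inv_ne_zero hr, ?_, ?_⟩
  · rw [hd, cubic, ha]
    field_simp
    ring
  · rw [h0, hd, ha]
    field_simp
    ring

variable {a b : ℚ} {D : ℤ}

theorem even_of_cubicPoly_dvd (hab : 4 * a ^ 3 + 27 * b ^ 2 ≠ 0) (hD : D ≠ 0) {x y : ℚ}
    (h : (quadTwist a b D).toAffine.Nonsingular x y) {z : ℚ[X]}
    (hz : cubicPoly a b ∣ C (D : ℚ) * (C (x / D) - X) - z ^ 2) :
    Even (Point.some x y h : TwistPoint a b D) := by
  have hD' : (D : ℚ) ≠ 0 := Int.cast_ne_zero.mpr hD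
  obtain ⟨t, s, hs, hts, hx⟩ := exists_halving_of_cubicPoly_dvd hD' hz
  have hR : (quadTwist a b D).toAffine.Nonsingular (D * t) (D ^ 2 * s) := by
    rw [quadTwist_nonsingular_iff hab hD]
    unfold cubic at hts
    linear_combination (D : ℚ) ^ 3 * hts
  obtain ⟨h₃, hdouble⟩ := twistPoint_add_self hR (by positivity) rfl
  have hproj : projX (Point.some x y h : TwistPoint a b D) =
      projX (Point.some _ _ hR + Point.some _ _ hR : TwistPoint a b D) := by
    rw [hdouble, projX_some, projX_some]
    congr 2
    field_simp at hx ⊢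
    linear_combination hx
  rcases eq_or_eq_neg_of_projX_eq hD hproj with hP | hP
  · exact ⟨_, hP⟩
  · exact ⟨-Point.some _ _ hR, by rw [hP, neg_add]⟩

end Halving

section SquareClasses

open Polynomial WeierstrassCurve WeierstrassCurve.Affine

theorem exists_dvd_sub_sq_of_dvd_mul_sub_sq {R : Type*} [CommRing R] {f g h w e : R}
    (hfg : IsCoprime f g) (hg : f ∣ g - w ^ 2) (hgh : f ∣ g * h - e ^ 2) :
    ∃ z, f ∣ h - z ^ 2 := by
  obtain ⟨c, hc⟩ := hg
  obtain ⟨c', hc'⟩ := hgh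
  have hfw : IsCoprime f w := by
    rw [show g = w ^ 2 + f * c by linear_combination hc, IsCoprime.add_mul_left_right_iff] at hfg
    exact (IsCoprime.pow_right_iff two_pos).mp hfg
  obtain ⟨u, v, huv⟩ := hfw
  refine ⟨e * v, h * u * (1 + v * w) - h * v ^ 2 * c + v ^ 2 * c', ?_⟩
  linear_combination v ^ 2 * hc' - h * v ^ 2 * hc - h * (1 + v * w) * huv

theorem isCoprime_cubicPoly_C_sub_X {F : Type*} [Field F] {a b x : F} (h : cubic a b x ≠ 0) :
    IsCoprime (cubicPoly a b) (C x - X) := by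
  obtain ⟨g, hg⟩ := X_sub_C_dvd_sub_C_eval (a := x) (p := cubicPoly a b)
  rw [eval_cubicPoly] at hg
  have hinv : C (cubic a b x)⁻¹ * C (cubic a b x) = 1 := by rw [← C_mul, inv_mul_cancel₀ h, C_1]
  exact ⟨C (cubic a b x)⁻¹, C (cubic a b x)⁻¹ * g, by
    linear_combination C (cubic a b x)⁻¹ * hg + hinv⟩

theorem mul_mul_eq_sq_line_sub_cubicPoly {F : Type*} [Field F] {a b d x₁ y₁ x₂ y₂ l : F}
    (hx : x₁ ≠ x₂) (hl : l * (x₁ - x₂) = y₁ - y₂) (h₁ : d * y₁ ^ 2 = cubic a b x₁)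
    (h₂ : d * y₂ ^ 2 = cubic a b x₂) :
    (C x₁ - X) * (C x₂ - X) * (C (d * l ^ 2 - x₁ - x₂) - X) =
      C d * (C y₁ + C l * (X - C x₁)) ^ 2 - cubicPoly a b := by
  unfold cubic at h₁ h₂
  obtain rfl : y₂ = y₁ - l * (x₁ - x₂) := by linear_combination hl
  have ha : a = 2 * d * l * (y₁ - l * x₁) + x₁ * x₂ + (x₁ + x₂) * (d * l ^ 2 - x₁ - x₂) := by
    apply mul_left_cancel₀ (sub_ne_zero.mpr hx)
    linear_combination h₂ - h₁
  have hb : b = d * y₁ ^ 2 - x₁ ^ 3 - a * x₁ := by linear_combination -h₁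
  rw [hb, ha]
  simp only [cubicPoly, cubic, C_mul, C_add, C_sub, C_pow, map_ofNat]
  ring

variable {a b : ℚ} {D : ℤ}

theorem cubicPoly_dvd_mul_add_X_sub_sq (hD : D ≠ 0) {x₁ y₁ x₂ y₂ l : ℚ}
    (h₁ : (quadTwist a b D).toAffine.Nonsingular x₁ y₁)
    (h₂ : (quadTwist a b D).toAffine.Nonsingular x₂ y₂) (hx : x₁ ≠ x₂)
    (hl : l = (y₁ - y₂) / (x₁ - x₂)) :
    ∃ e, cubicPoly a b ∣ (C (x₁ / D) - X) * (C (x₂ / D) - X) *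
      (C (D : ℚ) * (C ((l ^ 2 - x₁ - x₂) / D) - X)) - e ^ 2 := by
  have hD' : (D : ℚ) ≠ 0 := Int.cast_ne_zero.mpr hD
  have hsub : x₁ - x₂ ≠ 0 := sub_ne_zero.mpr hx
  have hslope : l / D * (x₁ / D - x₂ / D) = y₁ / D ^ 2 - y₂ / D ^ 2 := by
    rw [hl]
    field_simp
  have hline := mul_mul_eq_sq_line_sub_cubicPoly (fun h => hx ((div_left_inj' hD').mp h)) hslope
    (quadTwist_scaled_equation hD h₁) (quadTwist_scaled_equation hD h₂)
  rw [show D * (l / D) ^ 2 - x₁ / D - x₂ / D = (l ^ 2 - x₁ - x₂) / D by field_simp] at hline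
  exact ⟨C (D : ℚ) * (C (y₁ / D ^ 2) + C (l / D) * (X - C (x₁ / D))), -C (D : ℚ), by
    linear_combination C (D : ℚ) * hline⟩

theorem even_sub_of_projX_eq (hD : D ≠ 0) {P Q : TwistPoint a b D} (h : projX P = projX Q) :
    Even (P - Q) := by
  rcases eq_or_eq_neg_of_projX_eq hD h with rfl | rfl
  · simp
  · exact ⟨-Q, sub_eq_add_neg _ _⟩

theorem cubic_ne_zero_of_mem_twistXCoords (hD : D ≠ 0) {x : ℚ} (hx : x ∈ twistXCoords a b D) :
    cubic a b x ≠ 0 := by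
  obtain ⟨y, hy, hxy⟩ := hx
  rw [← hxy]
  positivity

theorem even_sub_of_cubicPoly_dvd (hab : 4 * a ^ 3 + 27 * b ^ 2 ≠ 0) (hD : D ≠ 0)
    {x₁ y₁ x₂ y₂ : ℚ} (h₁ : (quadTwist a b D).toAffine.Nonsingular x₁ y₁)
    (h₂ : (quadTwist a b D).toAffine.Nonsingular x₂ y₂) (hx₁ : x₁ / D ∈ twistXCoords a b D)
    (hx₂ : x₂ / D ∈ twistXCoords a b D)
    (hsq : ∃ z, cubicPoly a b ∣ (C (x₁ / D) - X) * (C (x₂ / D) - X) - z ^ 2) :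
    Even (Point.some x₁ y₁ h₁ - Point.some x₂ y₂ h₂ : TwistPoint a b D) := by
  rcases eq_or_ne x₁ x₂ with rfl | hx
  · exact even_sub_of_projX_eq hD rfl
  obtain ⟨h₂', hneg⟩ := twistPoint_neg h₂
  obtain ⟨h₃, hadd⟩ := twistPoint_add_of_X_ne h₁ h₂' hx rfl
  rw [sub_eq_add_neg, hneg, hadd]
  obtain ⟨w, hw⟩ := hsq
  obtain ⟨e, he⟩ := cubicPoly_dvd_mul_add_X_sub_sq hD h₁ h₂' hx rfl
  have hcoprime₁ := isCoprime_cubicPoly_C_sub_X (cubic_ne_zero_of_mem_twistXCoords hD hx₁)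
  have hcoprime₂ := isCoprime_cubicPoly_C_sub_X (cubic_ne_zero_of_mem_twistXCoords hD hx₂)
  obtain ⟨z, hz⟩ := exists_dvd_sub_sq_of_dvd_mul_sub_sq (hcoprime₁.mul_right hcoprime₂) hw he
  exact even_of_cubicPoly_dvd hab hD h₃ hz

end SquareClasses

section Descent

open Polynomial WeierstrassCurve WeierstrassCurve.Affine

variable {a b : ℚ} {D : ℤ}

/-- The possible values of `projX` at the `2`-torsion points of the twists, the same for all
twists. -/
def twoTorsionProjX (a b : ℚ) : Set (Fin 2 → ℚ) :=
  insert ![1, 0] ((fun x => ![x, 1]) '' {x | cubic a b x = 0})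

theorem finite_twoTorsionProjX (a b : ℚ) : (twoTorsionProjX a b).Finite := by
  refine Set.Finite.insert _ (Set.Finite.image _ ?_)
  refine (finite_setOfPred_isRoot (monic_cubicPoly a b).ne_zero).subset fun x hx => ?_
  exact (eval_cubicPoly a b x).trans hx

theorem projX_mem_twoTorsionProjX_or (hD : D ≠ 0) (P : TwistPoint a b D) :
    projX P ∈ twoTorsionProjX a b ∨
      ∃ x y h, P = Point.some x y h ∧ x / D ∈ twistXCoords a b D := by
  rcases P with _ | ⟨x, y, h⟩
  · exact Or.inl (Set.mem_insert _ _)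
  have hscaled := quadTwist_scaled_equation hD h
  by_cases hy : y / (D : ℚ) ^ 2 = 0
  · refine Or.inl (Set.mem_insert_of_mem _ ⟨x / D, ?_, rfl⟩)
    simpa [hy] using hscaled.symm
  · exact Or.inr ⟨x, y, h, rfl, _, hy, hscaled⟩

theorem exists_coveredByClasses_even_sub (hab : 4 * a ^ 3 + 27 * b ^ 2 ≠ 0) :
    ∃ C : ℕ, ∀ D : ℤ, D ≠ 0 → CoveredByClasses
      (fun P Q : TwistPoint a b D => Even (P - Q)) Set.univ
      (C ^ (D.natAbs.primeFactors.card + 1)) := by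
  obtain ⟨m, hm⟩ := exists_coveredByClasses_eq (finite_twoTorsionProjX a b)
  obtain ⟨M, hM⟩ := exists_coveredByClasses_dvd_sub_sq hab (squarefree_cubicPoly hab) dvd_rfl
  refine ⟨m + M, fun D hD => ?_⟩
  have htorsion : CoveredByClasses (fun P Q : TwistPoint a b D => Even (P - Q))
      {P | projX P ∈ twoTorsionProjX a b} m :=
    hm.of_mapsTo projX (fun _ => id) fun _ _ _ _ => even_sub_of_projX_eq hD
  have hgeneric : CoveredByClasses (fun P Q : TwistPoint a b D => Even (P - Q))
      {P | ∃ x y h, P = Point.some x y h ∧ x / D ∈ twistXCoords a b D}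
      (M ^ (D.natAbs.primeFactors.card + 1)) := by
    refine (hM D hD).of_mapsTo (fun P => projX P 0) ?_ ?_
    · rintro _ ⟨x, y, h, rfl, hx⟩
      exact hx
    · rintro _ ⟨x₁, y₁, h₁, rfl, hx₁⟩ _ ⟨x₂, y₂, h₂, rfl, hx₂⟩
      exact even_sub_of_cubicPoly_dvd hab hD h₁ h₂ hx₁ hx₂
  have huniv := Set.eq_univ_of_forall (projX_mem_twoTorsionProjX_or (a := a) (b := b) hD)
  rw [← huniv]
  refine (htorsion.union hgeneric).mono ?_
  calc m + M ^ (D.natAbs.primeFactors.card + 1)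
      ≤ m ^ (D.natAbs.primeFactors.card + 1) + M ^ (D.natAbs.primeFactors.card + 1) := by
        gcongr
        exact Nat.le_self_pow (Nat.succ_ne_zero _) _
    _ ≤ (m + M) ^ (D.natAbs.primeFactors.card + 1) :=
        pow_add_pow_le m.zero_le M.zero_le (Nat.succ_ne_zero _)

end Descent

theorem exists_one_lt_forall_mul_pow_le {A B : ℝ} (hA : 0 ≤ A) (hB : 0 ≤ B) (m : ℕ) :
    ∃ C : ℝ, 1 < C ∧ ∀ n : ℕ, A * (B ^ (n + 1)) ^ m ≤ C ^ (n + 1) := by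
  have hB' : 1 ≤ (B + 1) ^ m := one_le_pow₀ (by linarith)
  refine ⟨(A + 2) * (B + 1) ^ m, one_lt_mul_of_lt_of_le (by linarith) hB', fun n => ?_⟩
  calc A * (B ^ (n + 1)) ^ m ≤ (A + 2) ^ (n + 1) * ((B + 1) ^ (n + 1)) ^ m := by
        gcongr
        · exact (by linarith : A ≤ A + 2).trans (le_self_pow₀ (by linarith) n.succ_ne_zero)
        · linarith
    _ = ((A + 2) * (B + 1) ^ m) ^ (n + 1) := by rw [mul_pow, pow_right_comm]

end QuadTwistAP

open QuadTwistAP in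
theorem AP_length_le_of_quadTwist_general (a b : ℚ) (hab : 4 * a ^ 3 + 27 * b ^ 2 ≠ 0) :
    ∃ C : ℝ, 1 < C ∧
      ∀ D : ℤ, D ≠ 0 →
        ∀ (N : ℕ) (x y : Fin N → ℚ),
          (∀ i, (quadTwist a b D).toAffine.Nonsingular (x i) (y i)) →
          (IsNontrivAP x ∨ IsNontrivAP y) →
          (N : ℝ) ≤ C ^ (D.natAbs.primeFactors.card + 1) := by
  obtain ⟨δ, hheight⟩ := exists_isQuadraticHeight_twistHeight hab
  obtain ⟨c₀, hspread⟩ := exists_isHeightSpread_of_isNontrivAP a b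
  obtain ⟨B, hdescent⟩ := exists_coveredByClasses_even_sub hab
  set c := max c₀ 7
  set c' := c * Real.exp (c * δ) + 2 * c * δ + δ
  obtain ⟨k, hk⟩ := pow_unbounded_of_one_lt (224 * c' ^ 3) one_lt_two
  obtain ⟨C, hC, hbound⟩ := exists_one_lt_forall_mul_pow_le
    (A := 2 ^ (2 * k) * c' ^ 2 * Real.exp 1 + 3 * 2 ^ k) (by positivity) B.cast_nonneg (2 * k)
  refine ⟨C, hC, fun D hD N x y h hAP => le_trans ?_ (hbound _)⟩
  have hgrowth : HasExpGrowth (twistHeight (a := a) (b := b) (D := D)) c :=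
    (hasExpGrowth_twistHeight hD).mono (by norm_num) (le_max_right _ _)
  have hcard := (hspread c (le_max_left _ _) hD h hAP).card_le_of_weil (hheight D hD) hgrowth
    (hdescent D hD) (twistPoint_some_injective_of_isNontrivAP h hAP)
    ((by norm_num : (1 : ℝ) ≤ 7).trans (le_max_right _ _)) le_rfl hk.le
  rwa [Fintype.card_fin, Nat.cast_pow] at hcard

/-- For an elliptic curve `E : y² = x³ + ax + b` over `ℚ` there is a constant `C > 1` such
that for every squarefree nonzero integer `D`, any non-trivial arithmetic progression of
length `N` in the `x`-coordinates (or `y`-coordinates) of rational points of the quadratic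
twist `E^(D)` satisfies `N ≤ C^(ω(D)+1)`. -/
theorem AP_length_le_of_quadTwist (a b : ℚ) (hab : 4 * a ^ 3 + 27 * b ^ 2 ≠ 0) :
    ∃ C : ℝ, 1 < C ∧
      ∀ D : ℤ, D ≠ 0 → Squarefree D →
        ∀ (N : ℕ) (x y : Fin N → ℚ),
          (∀ i, (quadTwist a b D).toAffine.Nonsingular (x i) (y i)) →
          (IsNontrivAP x ∨ IsNontrivAP y) →
          (N : ℝ) ≤ C ^ (D.natAbs.primeFactors.card + 1) := by
  obtain ⟨C, hC, h⟩ := AP_length_le_of_quadTwist_general a b hab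
  exact ⟨C, hC, fun D hD _ => h D hD⟩
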